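/- arXiv:1502.07289 — 3 statements merged into one kernel-verified Lean document; each statement's English description precedes it below -/
import Mathlib

section
/- Let k ≥ 3 and 1 ≤ j ≤ k−1 be integers and let p = (j·log n + c_n)/C(n,k−j). If c_n → ∞, then with high probability H^k(n,p) is j-connected, and in particular contains no isolated j-set. -/
open Filter Asymptotics

open scoped Classical

noncomputable section

/-- The collection of all `k`-element subsets of the vertex set `Fin n`,
    i.e. all potential edges of a `k`-uniform hypergraph on `n` vertices. -/
def kSets (n k : ℕ) : Finset (Finset (Fin n)) :=
  Finset.powersetCard k (Finset.univ : Finset (Fin n))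

/-- The probability that the binomial random `k`-uniform hypergraph `H^k(n,p)`
    (each `k`-set an edge independently with probability `p`) has property `Q`. -/
def binomProb (n k : ℕ) (p : ℝ) (Q : Finset (Finset (Fin n)) → Prop) : ℝ :=
  ∑ H ∈ (kSets n k).powerset,
    (if Q H then p ^ H.card * (1 - p) ^ ((kSets n k).card - H.card) else 0)

/-- The expectation of a real-valued random variable `X` of `H^k(n,p)`. -/
def binomExp (n k : ℕ) (p : ℝ) (X : Finset (Finset (Fin n)) → ℝ) : ℝ :=
  ∑ H ∈ (kSets n k).powerset,
    p ^ H.card * (1 - p) ^ ((kSets n k).card - H.card) * X H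

/-- The degree of a vertex set `J` in the hypergraph with edge set `H`:
    the number of edges containing `J`. -/
def setDegree {n : ℕ} (H : Finset (Finset (Fin n))) (J : Finset (Fin n)) : ℕ :=
  (H.filter (fun e => J ⊆ e)).card

/-- `J` is isolated in `H`: it is contained in no edge. -/
def IsIsolatedSet {n : ℕ} (H : Finset (Finset (Fin n))) (J : Finset (Fin n)) : Prop :=
  ∀ e ∈ H, ¬ J ⊆ e

/-- Two sets `J1`, `J2` are `j`-connected in the hypergraph with edge set `H`:
    there is a walk of edges from one to the other in which consecutive edges
    intersect in at least `j` vertices. -/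
def JConn {n : ℕ} (j : ℕ) (H : Finset (Finset (Fin n))) (J1 J2 : Finset (Fin n)) : Prop :=
  ∃ e1 ∈ H, ∃ e2 ∈ H, J1 ⊆ e1 ∧ J2 ⊆ e2 ∧
    Relation.ReflTransGen (fun e f => e ∈ H ∧ f ∈ H ∧ j ≤ (e ∩ f).card) e1 e2

/-- The hypergraph with edge set `H` is `j`-connected:
    all `j`-sets lie in a single `j`-component, i.e. are pairwise `j`-connected. -/
def JConnectedHG (n j : ℕ) (H : Finset (Finset (Fin n))) : Prop :=
  ∀ J1 J2 : Finset (Fin n), J1.card = j → J2.card = j → JConn j H J1 J2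

/-- `C` is a `j`-component of `H`: a maximal nonempty set of pairwise `j`-connected `j`-sets. -/
def IsJComponent (n j : ℕ) (H : Finset (Finset (Fin n))) (C : Finset (Finset (Fin n))) : Prop :=
  C.Nonempty ∧ (∀ J ∈ C, J.card = j) ∧ (∀ J1 ∈ C, ∀ J2 ∈ C, JConn j H J1 J2) ∧
    ∀ J : Finset (Fin n), J.card = j → (∃ J' ∈ C, JConn j H J J') → J ∈ C

/-- `D_s`: the number of `j`-sets of degree exactly `s`. -/
def numDegSets (n j s : ℕ) (H : Finset (Finset (Fin n))) : ℕ :=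
  ((Finset.powersetCard j (Finset.univ : Finset (Fin n))).filter
    (fun J => setDegree H J = s)).card

/-- The Poisson probability mass function with mean `lam`. -/
def poissonPMF (lam : ℝ) (i : ℕ) : ℝ := Real.exp (-lam) * lam ^ i / (Nat.factorial i)

/-- Total variation distance between the distribution of `D_s` in `H^k(n,p)`
    and the Poisson distribution with mean `lam`. -/
def dTVpoisson (n k j s : ℕ) (p lam : ℝ) : ℝ :=
  (1 / 2) * ∑' i : ℕ, |binomProb n k p (fun H => numDegSets n j s H = i) - poissonPMF lam i|

/-- The probability that the uniform random hypergraph `H^k(n,M)` (chosen uniformly among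
    all `k`-uniform hypergraphs on `Fin n` with exactly `M` edges) has property `Q`. -/
def uniformProb (n k M : ℕ) (Q : Finset (Finset (Fin n)) → Prop) : ℝ :=
  (((Finset.powersetCard M (kSets n k)).filter Q).card : ℝ) /
    ((Finset.powersetCard M (kSets n k)).card : ℝ)

/-!
Fix a `(j-1)`-set `I`. If no edge through `I` joins some nonempty set `S` of at most `n / 2` other
vertices to the vertices outside `I ∪ S`, call `(I, S)` a bad pair. Without bad pairs the
hypergraph is `j`-connected: for fixed `I`, the vertices `y` with `I ∪ {y}` joined to a given
`I ∪ {x}` cannot form one side of a proper cut, so all `j`-sets through `I` are in one component,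
and any two `j`-sets are linked by a chain of one-element exchanges.

Bad pairs are excluded by a first moment bound. Put `L = log n` and `t = k - j`. A pair with
`|S| = s` is bad only if all edges meeting `S` exactly once are missing, so their expected number is
at most `n ^ (j - 1) * (n ^ s / s!) * exp (-(j * L + c) * s * ρ)`, where
`ρ = C(n - (j - 1) - s, t) / C(n, t)` satisfies both `1 - ρ = O(s / n)` and `ρ ≥ 4⁻ᵗ`.
* If `s * L ≤ n`, then `L * (1 - ρ) ≤ 2 * t`, and as `j - 1 + s ≤ j * s` the powers of `n` cancel up
  to a factor `E ^ s` with `E = exp (2 * j * t)`; the sum over these `s` is at most `exp (-c * 4⁻ᵗ) * exp E`.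
* If `s * L ≥ n`, then `n ^ s / s! ≤ (e * L) ^ s` is negligible against `exp (-j * L * s * 4⁻ᵗ)`.
-/

section BinomialModel

variable {n k : ℕ} {p : ℝ}

theorem binomProb_nonneg (hp0 : 0 ≤ p) (hp1 : p ≤ 1) (Q : Finset (Finset (Fin n)) → Prop) :
    0 ≤ binomProb n k p Q := by
  have : 0 ≤ 1 - p := sub_nonneg.2 hp1
  exact Finset.sum_nonneg fun H _ => by split_ifs <;> positivity

theorem binomProb_eq_sum_filter (Q : Finset (Finset (Fin n)) → Prop) :
    binomProb n k p Q = ∑ H ∈ (kSets n k).powerset.filter Q,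
      p ^ H.card * (1 - p) ^ ((kSets n k).card - H.card) :=
  (Finset.sum_filter ..).symm

theorem binomProb_mono (hp0 : 0 ≤ p) (hp1 : p ≤ 1) {Q R : Finset (Finset (Fin n)) → Prop}
    (hQR : ∀ H, Q H → R H) : binomProb n k p Q ≤ binomProb n k p R := by
  have : 0 ≤ 1 - p := sub_nonneg.2 hp1
  rw [binomProb_eq_sum_filter, binomProb_eq_sum_filter]
  exact Finset.sum_le_sum_of_subset_of_nonneg
    (Finset.monotone_filter_right _ fun H _ => hQR H) fun H _ _ => by positivity

theorem binomProb_not (Q : Finset (Finset (Fin n)) → Prop) :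
    binomProb n k p (fun H => ¬ Q H) = 1 - binomProb n k p Q := by
  have total : ∑ H ∈ (kSets n k).powerset,
      p ^ H.card * (1 - p) ^ ((kSets n k).card - H.card) = 1 := by
    rw [Finset.sum_pow_mul_eq_add_pow, add_sub_cancel, one_pow]
  rw [← total, binomProb, binomProb, ← Finset.sum_sub_distrib]
  refine Finset.sum_congr rfl fun H _ => ?_
  by_cases hQ : Q H <;> simp [hQ]

theorem binomProb_le_one (hp0 : 0 ≤ p) (hp1 : p ≤ 1) (Q : Finset (Finset (Fin n)) → Prop) :
    binomProb n k p Q ≤ 1 :=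
  sub_nonneg.1 (binomProb_not Q ▸ binomProb_nonneg hp0 hp1 _)

theorem binomProb_exists_le_sum (hp0 : 0 ≤ p) (hp1 : p ≤ 1) {ι : Type*} (T : Finset ι)
    (B : ι → Finset (Finset (Fin n)) → Prop) :
    binomProb n k p (fun H => ∃ i ∈ T, B i H) ≤ ∑ i ∈ T, binomProb n k p (B i) := by
  have : 0 ≤ 1 - p := sub_nonneg.2 hp1
  unfold binomProb
  rw [Finset.sum_comm]
  refine Finset.sum_le_sum fun H _ => ?_
  have hterm : ∀ i ∈ T,
      0 ≤ if B i H then p ^ H.card * (1 - p) ^ ((kSets n k).card - H.card) else 0 :=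
    fun i _ => by split_ifs <;> positivity
  by_cases hB : ∃ i ∈ T, B i H
  · obtain ⟨i, hi, hBi⟩ := hB
    rw [if_pos ⟨i, hi, hBi⟩]
    simpa only [if_pos hBi] using Finset.single_le_sum hterm hi
  · rw [if_neg hB]
    exact Finset.sum_nonneg hterm

theorem binomProb_disjoint {A : Finset (Finset (Fin n))} (hA : A ⊆ kSets n k) :
    binomProb n k p (fun H => Disjoint H A) = (1 - p) ^ A.card := by
  have hcard : (kSets n k \ A).card + A.card = (kSets n k).card :=
    Finset.card_sdiff_add_card_eq_card hA
  have hweight : ∀ H ∈ (kSets n k \ A).powerset,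
      p ^ H.card * (1 - p) ^ ((kSets n k).card - H.card) =
        (1 - p) ^ A.card * (p ^ H.card * (1 - p) ^ ((kSets n k \ A).card - H.card)) := by
    intro H hH
    have hHcard := Finset.card_le_card (Finset.mem_powerset.1 hH)
    rw [← hcard, Nat.sub_add_comm hHcard, pow_add]
    ring
  calc binomProb n k p (fun H => Disjoint H A)
      = ∑ H ∈ (kSets n k \ A).powerset,
          (1 - p) ^ A.card * (p ^ H.card * (1 - p) ^ ((kSets n k \ A).card - H.card)) := by
        rw [binomProb_eq_sum_filter]
        refine Finset.sum_congr (Finset.ext fun H => ?_) hweight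
        simp only [Finset.mem_filter, Finset.mem_powerset, Finset.subset_sdiff]
    _ = (1 - p) ^ A.card := by
        rw [← Finset.mul_sum, Finset.sum_pow_mul_eq_add_pow, add_sub_cancel, one_pow, mul_one]

end BinomialModel

section Connectivity

variable {n j : ℕ} {H : Finset (Finset (Fin n))}

theorem JConn.of_subset_edge {e A B : Finset (Fin n)} (he : e ∈ H) (hA : A ⊆ e) (hB : B ⊆ e) :
    JConn j H A B :=
  ⟨e, he, e, he, hA, hB, .refl⟩

theorem JConn.trans {A B C : Finset (Fin n)} (hAB : JConn j H A B) (hBC : JConn j H B C)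
    (hB : j ≤ B.card) : JConn j H A C := by
  obtain ⟨e, he, f, hf, hAe, hBf, hef⟩ := hAB
  obtain ⟨f', hf', g, hg, hBf', hCg, hfg⟩ := hBC
  have hff' : j ≤ (f ∩ f').card := hB.trans (Finset.card_le_card (Finset.subset_inter hBf hBf'))
  exact ⟨e, he, g, hg, hAe, hCg, (hef.tail ⟨hf, hf', hff'⟩).trans hfg⟩

theorem JConn.not_isIsolatedSet {A B : Finset (Fin n)} (h : JConn j H A B) :
    ¬ IsIsolatedSet H A := by
  obtain ⟨e, he, -, -, hAe, -⟩ := h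
  exact fun hiso => hiso e he hAe

theorem jConnectedHG_and_not_isIsolatedSet_iff :
    (JConnectedHG n j H ∧ ∀ J : Finset (Fin n), J.card = j → ¬ IsIsolatedSet H J) ↔
      JConnectedHG n j H :=
  and_iff_left_of_imp fun h J hJ => (h J J hJ hJ).not_isIsolatedSet

theorem reflTransGen_exchange_of_card_eq {α : Type*} [DecidableEq α] {A B : Finset α}
    (h : A.card = B.card) :
    Relation.ReflTransGen
      (fun A B : Finset α => ∃ I, ∃ x ∉ I, ∃ y ∉ I, insert x I = A ∧ insert y I = B) A B := by
  induction hd : (A \ B).card generalizing A with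
  | zero =>
    have hAB : A ⊆ B := Finset.sdiff_eq_empty_iff_subset.1 (Finset.card_eq_zero.1 hd)
    rw [Finset.eq_of_subset_of_card_le hAB h.ge]
  | succ d ih =>
    obtain ⟨x, hx⟩ : (A \ B).Nonempty := Finset.card_pos.1 (by omega)
    obtain ⟨y, hy⟩ : (B \ A).Nonempty :=
      Finset.card_pos.1 (by rw [Finset.card_sdiff_comm h.symm]; omega)
    rw [Finset.mem_sdiff] at hx hy
    have hyI : y ∉ A.erase x := fun hmem => hy.2 (Finset.mem_of_mem_erase hmem)
    have hsdiff : insert y (A.erase x) \ B = (A \ B).erase x := by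
      rw [Finset.insert_sdiff_of_mem _ hy.1, Finset.erase_sdiff_comm]
    refine .head ⟨A.erase x, x, Finset.notMem_erase x A, y, hyI, Finset.insert_erase hx.1, rfl⟩
      (ih ?_ ?_)
    · rw [Finset.card_insert_of_notMem hyI, Finset.card_erase_add_one hx.1, h]
    · rw [hsdiff, Finset.card_erase_of_mem (Finset.mem_sdiff.2 hx), hd, Nat.add_sub_cancel]

/-- In the link of every `(j - 1)`-set `I`, every nonempty set `S` of at most half of the vertices
is joined to its complement by an edge of `H`. -/
def CrossesSmallCuts (j : ℕ) (H : Finset (Finset (Fin n))) : Prop :=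
  ∀ I S : Finset (Fin n), I.card + 1 = j → S.Nonempty → Disjoint I S → 2 * S.card ≤ n →
    ∃ e ∈ H, I ⊆ e ∧ (e ∩ S).Nonempty ∧ (e \ (I ∪ S)).Nonempty

namespace CrossesSmallCuts

variable {I S : Finset (Fin n)} {x y : Fin n}

theorem exists_crossing_edge (h : CrossesSmallCuts j H) (hI : I.card + 1 = j) (hS : S.Nonempty)
    (hIS : Disjoint I S) (huniv : I ∪ S ≠ Finset.univ) :
    ∃ e ∈ H, I ⊆ e ∧ (e ∩ S).Nonempty ∧ (e \ (I ∪ S)).Nonempty := by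
  by_cases hsmall : 2 * S.card ≤ n
  · exact h I S hI hS hIS hsmall
  have hT : (I ∪ S)ᶜ.Nonempty := by
    rwa [Finset.nonempty_iff_ne_empty, ne_eq, Finset.compl_eq_empty_iff]
  have hIT : Disjoint I (I ∪ S)ᶜ :=
    disjoint_compl_right.mono_left Finset.subset_union_left
  have hTcard : 2 * (I ∪ S)ᶜ.card ≤ n := by
    have hle : S.card ≤ (I ∪ S).card := Finset.card_le_card Finset.subset_union_right
    rw [Finset.card_compl, Fintype.card_fin]
    omega
  obtain ⟨e, he, hIe, heT, u, hu⟩ := h I (I ∪ S)ᶜ hI hT hIT hTcard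
  refine ⟨e, he, hIe, ⟨u, ?_⟩, by rwa [Finset.sdiff_eq_inter_compl]⟩
  simp only [Finset.mem_sdiff, Finset.mem_union, Finset.mem_compl] at hu
  rw [Finset.mem_inter]
  tauto

theorem jConn_insert_self (h : CrossesSmallCuts j H) (hjn : j < n) (hI : I.card + 1 = j)
    (hx : x ∉ I) : JConn j H (insert x I) (insert x I) := by
  have huniv : I ∪ {x} ≠ Finset.univ := by
    intro heq
    have hle := heq ▸ Finset.card_union_le I {x}
    rw [Finset.card_univ, Fintype.card_fin, Finset.card_singleton] at hle
    omega
  obtain ⟨e, he, hIe, ⟨u, hu⟩, -⟩ := h.exists_crossing_edge hI (Finset.singleton_nonempty x)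
    (Finset.disjoint_singleton_right.2 hx) huniv
  rw [Finset.mem_inter, Finset.mem_singleton] at hu
  have hxe : insert x I ⊆ e := Finset.insert_subset (hu.2 ▸ hu.1) hIe
  exact .of_subset_edge he hxe hxe

theorem jConn_insert_insert (h : CrossesSmallCuts j H) (hjn : j < n) (hI : I.card + 1 = j)
    (hx : x ∉ I) (hy : y ∉ I) : JConn j H (insert x I) (insert y I) := by
  by_contra hxy
  set S : Finset (Fin n) :=
    Finset.univ.filter fun z => z ∉ I ∧ JConn j H (insert x I) (insert z I) with hSdef
  have mem_S : ∀ z, z ∈ S ↔ z ∉ I ∧ JConn j H (insert x I) (insert z I) := by simp [hSdef]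
  have hxS : x ∈ S := (mem_S x).2 ⟨hx, h.jConn_insert_self hjn hI hx⟩
  have hIS : Disjoint I S := Finset.disjoint_right.2 fun z hz => ((mem_S z).1 hz).1
  have huniv : I ∪ S ≠ Finset.univ := fun heq => by
    have hmem := heq ▸ Finset.mem_univ y
    exact (Finset.mem_union.1 hmem).elim hy fun hyS => hxy ((mem_S y).1 hyS).2
  obtain ⟨e, he, hIe, ⟨u, hu⟩, v, hv⟩ := h.exists_crossing_edge hI ⟨x, hxS⟩ hIS huniv
  rw [Finset.mem_inter, mem_S] at hu
  rw [Finset.mem_sdiff, Finset.mem_union, not_or] at hv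
  have huv : JConn j H (insert u I) (insert v I) :=
    .of_subset_edge he (Finset.insert_subset hu.1 hIe) (Finset.insert_subset hv.1 hIe)
  have hcard : j ≤ (insert u I).card := by rw [Finset.card_insert_of_notMem hu.2.1, hI]
  exact hv.2.2 ((mem_S v).2 ⟨hv.2.1, hu.2.2.trans huv hcard⟩)

theorem jConnectedHG (h : CrossesSmallCuts j H) (hj : 1 ≤ j) (hjn : j < n) :
    JConnectedHG n j H := by
  intro A B hA hB
  induction reflTransGen_exchange_of_card_eq (hA.trans hB.symm) with
  | refl =>
    obtain ⟨x, hx⟩ : A.Nonempty := Finset.card_pos.1 (by omega)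
    have hI : (A.erase x).card + 1 = j := (Finset.card_erase_add_one hx).trans hA
    exact Finset.insert_erase hx ▸ h.jConn_insert_self hjn hI (Finset.notMem_erase x A)
  | tail _ hexchange ih =>
    obtain ⟨I, x, hx, y, hy, rfl, rfl⟩ := hexchange
    have hI : I.card + 1 = j := (Finset.card_insert_of_notMem hy).symm.trans hB
    have hxI : (insert x I).card = j := (Finset.card_insert_of_notMem hx).trans hI
    exact (ih hxI).trans (h.jConn_insert_insert hjn hI hx hy) hxI.ge

end CrossesSmallCuts

end Connectivity

section FirstMoment

theorem card_filter_subset_and_card_inter_eq {α : Type*} [Fintype α] [DecidableEq α]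
    {I S : Finset α} {k m : ℕ} (hIS : Disjoint I S) (hm : I.card + m ≤ k) :
    ((Finset.powersetCard k Finset.univ).filter fun e => I ⊆ e ∧ (e ∩ S).card = m).card =
      S.card.choose m * (Fintype.card α - I.card - S.card).choose (k - I.card - m) := by
  have hcompl : (I ∪ S)ᶜ.card = Fintype.card α - I.card - S.card := by
    rw [Finset.card_compl, Finset.card_union_of_disjoint hIS, Nat.sub_sub]
  rw [← hcompl, ← Finset.card_powersetCard m S, ← Finset.card_powersetCard _ (I ∪ S)ᶜ,
    ← Finset.card_product]
  have hdisj : ∀ X ⊆ S, ∀ R ⊆ (I ∪ S)ᶜ, Disjoint I X ∧ Disjoint (I ∪ X) R := by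
    intro X hX R hR
    exact ⟨hIS.mono_right hX,
      Disjoint.mono (Finset.union_subset_union_right hX) hR disjoint_compl_right⟩
  refine Finset.card_nbij' (fun e => (e ∩ S, e \ (I ∪ S))) (fun q => I ∪ q.1 ∪ q.2) ?_ ?_ ?_ ?_
  · intro e he
    simp only [Finset.coe_filter, Finset.mem_powersetCard, Set.mem_ofPred_eq] at he
    obtain ⟨⟨-, hek⟩, hIe, heS⟩ := he
    have heR : e \ (I ∪ S) ⊆ (I ∪ S)ᶜ := by grind [Finset.mem_compl]
    have heq : I ∪ e ∩ S ∪ e \ (I ∪ S) = e := by grind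
    have hd := hdisj (e ∩ S) Finset.inter_subset_right _ heR
    have hcard := congrArg Finset.card heq
    rw [Finset.card_union_of_disjoint hd.2, Finset.card_union_of_disjoint hd.1] at hcard
    simp only [Finset.coe_product, Set.mem_prod, Finset.mem_coe, Finset.mem_powersetCard]
    exact ⟨⟨Finset.inter_subset_right, heS⟩, heR, by omega⟩
  · rintro ⟨X, R⟩ hq
    simp only [Finset.coe_product, Set.mem_prod, Finset.mem_coe, Finset.mem_powersetCard] at hq
    obtain ⟨⟨hX, hXm⟩, hR, hRcard⟩ := hq
    have hd := hdisj X hX R hR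
    have hinter : (I ∪ X ∪ R) ∩ S = X := by
      grind [Finset.disjoint_left, Finset.mem_compl]
    simp only [Finset.coe_filter, Finset.mem_powersetCard, Set.mem_ofPred_eq]
    refine ⟨⟨Finset.subset_univ _, ?_⟩, by grind, by rw [hinter, hXm]⟩
    rw [Finset.card_union_of_disjoint hd.2, Finset.card_union_of_disjoint hd.1]
    omega
  · intro e he
    simp only [Finset.coe_filter, Set.mem_ofPred_eq] at he
    grind
  · rintro ⟨X, R⟩ hq
    simp only [Finset.coe_product, Set.mem_prod, Finset.mem_coe, Finset.mem_powersetCard] at hq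
    refine Prod.ext ?_ ?_ <;> grind [Finset.disjoint_left, Finset.mem_compl]

/-- The `k`-sets containing `I` and meeting `S` in exactly one vertex. These are the edges used to
join `S` to its complement in the link of `I`; asking for exactly one vertex makes them easy to
count. -/
def crossingSets (n k : ℕ) (I S : Finset (Fin n)) : Finset (Finset (Fin n)) :=
  (kSets n k).filter fun e => I ⊆ e ∧ (e ∩ S).card = 1

variable {n k j s : ℕ} {p : ℝ}

theorem card_crossingSets {I S : Finset (Fin n)} (hIS : Disjoint I S) (hIk : I.card + 1 ≤ k) :
    (crossingSets n k I S).card =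
      S.card * (n - I.card - S.card).choose (k - I.card - 1) := by
  rw [crossingSets, kSets, card_filter_subset_and_card_inter_eq hIS hIk, Nat.choose_one_right,
    Fintype.card_fin]

theorem crossesSmallCuts_of_forall_not_disjoint_crossingSets {H : Finset (Finset (Fin n))}
    (hjk : j < k)
    (h : ∀ I S : Finset (Fin n), I.card + 1 = j → S.Nonempty → Disjoint I S → 2 * S.card ≤ n →
      ¬ Disjoint H (crossingSets n k I S)) : CrossesSmallCuts j H := by
  intro I S hI hS hIS hSn
  obtain ⟨e, he, hcross⟩ := Finset.not_disjoint_iff.1 (h I S hI hS hIS hSn)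
  simp only [crossingSets, kSets, Finset.mem_filter, Finset.mem_powersetCard] at hcross
  obtain ⟨⟨-, hek⟩, hIe, heS⟩ := hcross
  refine ⟨e, he, hIe, Finset.card_pos.1 (by omega), Finset.sdiff_nonempty.2 fun hsub => ?_⟩
  have hcover : e ⊆ I ∪ e ∩ S := by grind
  have hcard := (Finset.card_le_card hcover).trans (Finset.card_union_le _ _)
  omega

/-- The expected number, in `H^k(n,p)`, of pairs `(I, S)` of disjoint vertex sets with
`|I| = j - 1` and `|S| = s` such that no edge contains `I` and exactly one vertex of `S`. -/
def expectedEmptyCuts (n k j : ℕ) (p : ℝ) (s : ℕ) : ℝ :=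
  n.choose (j - 1) * (n - (j - 1)).choose s *
    (1 - p) ^ (s * (n - (j - 1) - s).choose (k - j))

theorem binomProb_exists_emptyCut_le (hj : 1 ≤ j) (hjk : j < k) (hp0 : 0 ≤ p) (hp1 : p ≤ 1) :
    binomProb n k p (fun H => ∃ I ∈ Finset.powersetCard (j - 1) Finset.univ,
      ∃ S ∈ Finset.powersetCard s Iᶜ, Disjoint H (crossingSets n k I S)) ≤
    expectedEmptyCuts n k j p s := by
  have hcut : ∀ I ∈ Finset.powersetCard (j - 1) (Finset.univ : Finset (Fin n)),
      binomProb n k p (fun H => ∃ S ∈ Finset.powersetCard s Iᶜ,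
        Disjoint H (crossingSets n k I S)) ≤
      (n - (j - 1)).choose s * (1 - p) ^ (s * (n - (j - 1) - s).choose (k - j)) := by
    intro I hI
    have hIj : I.card = j - 1 := (Finset.mem_powersetCard.1 hI).2
    have hempty : ∀ S ∈ Finset.powersetCard s Iᶜ,
        binomProb n k p (fun H => Disjoint H (crossingSets n k I S)) =
          (1 - p) ^ (s * (n - (j - 1) - s).choose (k - j)) := by
      intro S hS
      obtain ⟨hSI, hSs⟩ := Finset.mem_powersetCard.1 hS
      have hIS : Disjoint I S := disjoint_compl_right.mono_right hSI
      have hedges : crossingSets n k I S ⊆ kSets n k := Finset.filter_subset _ _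
      rw [binomProb_disjoint hedges, card_crossingSets hIS (by omega), hSs, hIj,
        show k - (j - 1) - 1 = k - j by omega]
    refine (binomProb_exists_le_sum hp0 hp1 _ _).trans_eq ?_
    rw [Finset.sum_congr rfl hempty, Finset.sum_const, Finset.card_powersetCard,
      Finset.card_compl, Fintype.card_fin, hIj, nsmul_eq_mul]
  refine ((binomProb_exists_le_sum hp0 hp1 _ _).trans (Finset.sum_le_sum hcut)).trans_eq ?_
  rw [Finset.sum_const, Finset.card_powersetCard, Finset.card_univ, Fintype.card_fin,
    nsmul_eq_mul, ← mul_assoc, expectedEmptyCuts]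

theorem binomProb_not_jConnectedHG_le_sum (hj : 1 ≤ j) (hjk : j < k) (hjn : j < n) (hp0 : 0 ≤ p)
    (hp1 : p ≤ 1) :
    binomProb n k p (fun H => ¬ JConnectedHG n j H) ≤
      ∑ s ∈ Finset.Icc 1 (n / 2), expectedEmptyCuts n k j p s := by
  refine (binomProb_mono hp0 hp1 fun H hH => ?_).trans
    ((binomProb_exists_le_sum hp0 hp1 (Finset.Icc 1 (n / 2)) _).trans
      (Finset.sum_le_sum fun s _ => binomProb_exists_emptyCut_le hj hjk hp0 hp1))
  contrapose! hH
  refine CrossesSmallCuts.jConnectedHG (crossesSmallCuts_of_forall_not_disjoint_crossingSets hjk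
    fun I S hI hS hIS hSn => hH S.card ?_ I ?_ S ?_) hj hjn
  · exact Finset.mem_Icc.2 ⟨hS.card_pos, by omega⟩
  · exact Finset.mem_powersetCard.2 ⟨Finset.subset_univ I, by omega⟩
  · exact Finset.mem_powersetCard.2 ⟨Finset.subset_compl_iff_disjoint_left.2 hIS, rfl⟩

end FirstMoment

section Asymptotics

theorem one_sub_div_pow_le_choose_div_choose {n r t : ℕ} (h : r + t ≤ n) :
    (1 - (r + t) / n : ℝ) ^ t ≤ (n - r).choose t / n.choose t := by
  have hchoose : (0 : ℝ) < n.choose t := by exact_mod_cast Nat.choose_pos (by omega)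
  have hfrac : (r + t : ℝ) / n ≤ 1 := div_le_one_of_le₀ (by exact_mod_cast h) n.cast_nonneg
  have hbase : (1 - (r + t) / n) * n = (n - (r + t) : ℝ) := by
    rw [sub_mul, one_mul, div_mul_cancel_of_imp]
    intro hn
    norm_cast at hn ⊢
    omega
  have hsub : (n - (r + t) : ℝ) ≤ (n - r + 1 - t : ℕ) := by
    rw [sub_le_iff_le_add]
    norm_cast
    omega
  have hbase0 : (0 : ℝ) ≤ n - (r + t) := sub_nonneg.2 (by exact_mod_cast h)
  rw [le_div_iff₀ hchoose]
  calc (1 - (r + t) / n : ℝ) ^ t * n.choose t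
      ≤ (1 - (r + t) / n : ℝ) ^ t * (n ^ t / t.factorial) :=
        mul_le_mul_of_nonneg_left (Nat.choose_le_pow_div t n) (pow_nonneg (sub_nonneg.2 hfrac) t)
    _ = (n - (r + t) : ℝ) ^ t / t.factorial := by rw [← mul_div_assoc, ← mul_pow, hbase]
    _ ≤ ((n - r + 1 - t : ℕ) : ℝ) ^ t / t.factorial := by gcongr
    _ ≤ (n - r).choose t := Nat.pow_le_choose t (n - r)

theorem one_sub_choose_div_choose_le {n r t : ℕ} (h : r + t ≤ n) :
    (1 - (n - r).choose t / n.choose t : ℝ) ≤ t * ((r + t) / n) := by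
  have hfrac : (r + t : ℝ) / n ≤ 1 := div_le_one_of_le₀ (by exact_mod_cast h) n.cast_nonneg
  have bernoulli := one_add_mul_le_pow (a := -((r + t : ℝ) / n)) (by linarith) t
  rw [← sub_eq_add_neg] at bernoulli
  linarith [one_sub_div_pow_le_choose_div_choose h]

theorem log_mul_one_sub_choose_div_choose_le {n r t : ℕ} (h : r + t ≤ n)
    (hlog : (r + t) * Real.log n ≤ 2 * n) :
    Real.log n * (1 - (n - r).choose t / n.choose t) ≤ t * 2 := by
  have hlog0 : 0 ≤ Real.log n := Real.log_natCast_nonneg n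
  calc Real.log n * (1 - (n - r).choose t / n.choose t)
      ≤ Real.log n * (t * ((r + t) / n)) :=
        mul_le_mul_of_nonneg_left (one_sub_choose_div_choose_le h) hlog0
    _ = t * ((r + t) * Real.log n / n) := by ring
    _ ≤ t * 2 := by
        gcongr
        exact div_le_of_le_mul₀ n.cast_nonneg zero_le_two hlog

theorem one_div_four_pow_le_choose_div_choose {n r t : ℕ} (h : 4 * (r + t) ≤ 3 * n) :
    ((1 : ℝ) / 4) ^ t ≤ (n - r).choose t / n.choose t := by
  have hcast : (4 : ℝ) * (r + t) ≤ 3 * n := by exact_mod_cast h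
  have hfrac : (r + t : ℝ) / n ≤ 3 / 4 :=
    div_le_of_le_mul₀ (by positivity) (by norm_num) (by linarith)
  refine le_trans ?_ (one_sub_div_pow_le_choose_div_choose (by omega))
  exact pow_le_pow_left₀ (by norm_num) (by linarith) t

theorem pow_eq_exp_mul_log {x : ℝ} (hx : 0 < x) (m : ℕ) : x ^ m = Real.exp (m * Real.log x) := by
  rw [Real.exp_nat_mul, Real.exp_log hx]

theorem pow_div_factorial_le_of_le_mul {x y : ℝ} {s : ℕ} (hx : 0 ≤ x) (hy : 0 ≤ y)
    (hxy : x ≤ s * y) : x ^ s / s.factorial ≤ (Real.exp 1 * y) ^ s := by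
  calc x ^ s / s.factorial ≤ (s * y) ^ s / s.factorial := by gcongr
    _ = (s : ℝ) ^ s / s.factorial * y ^ s := by rw [mul_pow, div_mul_eq_mul_div]
    _ ≤ Real.exp s * y ^ s := by
        gcongr
        exact Real.pow_div_factorial_le_exp s s.cast_nonneg s
    _ = (Real.exp 1 * y) ^ s := by rw [mul_pow, ← Real.exp_nat_mul, mul_one]

theorem eventually_mul_log_le_rpow (C : ℝ) {r : ℝ} (hr : 0 < r) :
    ∀ᶠ n : ℕ in atTop, C * Real.log n ≤ (n : ℝ) ^ r := by
  have hlittle := ((isLittleO_log_rpow_atTop hr).const_mul_left C).comp_tendsto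
    tendsto_natCast_atTop_atTop
  filter_upwards [hlittle.bound one_pos] with n hn
  rw [one_mul, Function.comp_apply, Function.comp_apply,
    Real.norm_of_nonneg (by positivity : (0 : ℝ) ≤ (n : ℝ) ^ r)] at hn
  exact (Real.le_norm_self _).trans hn

variable {n k j s : ℕ} {p c : ℝ}

theorem threshold_nonneg (hc : 0 ≤ c) : 0 ≤ (j * Real.log n + c) / n.choose (k - j) := by
  have : 0 ≤ Real.log n := Real.log_natCast_nonneg n
  positivity

theorem expectedEmptyCuts_le {x : ℝ} (hp1 : p ≤ 1) (hp : x / n.choose (k - j) ≤ p) :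
    expectedEmptyCuts n k j p s ≤ n ^ (j - 1) * (n ^ s / s.factorial) *
      Real.exp (-(x * (s * ((n - (j - 1 + s)).choose (k - j) / n.choose (k - j))))) := by
  set M := (n - (j - 1 + s)).choose (k - j) with hM
  have hchoose : ((n - (j - 1)).choose s : ℝ) ≤ n ^ s / s.factorial :=
    (Nat.cast_le.2 (Nat.choose_le_choose s (n.sub_le (j - 1)))).trans (Nat.choose_le_pow_div s n)
  have hempty : (1 - p) ^ (s * M) ≤
      Real.exp (-(x * (s * (M / n.choose (k - j))))) := by
    calc (1 - p) ^ (s * M) ≤ Real.exp (-p) ^ (s * M) :=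
          pow_le_pow_left₀ (sub_nonneg.2 hp1) (Real.one_sub_le_exp_neg p) _
      _ = Real.exp (-(s * M * p)) := by rw [← Real.exp_nat_mul, mul_neg, Nat.cast_mul]
      _ ≤ Real.exp (-(s * M * (x / n.choose (k - j)))) := by gcongr
      _ = Real.exp (-(x * (s * (M / n.choose (k - j))))) := by ring_nf
  rw [expectedEmptyCuts, Nat.sub_sub, ← hM]
  have : 0 ≤ 1 - p := sub_nonneg.2 hp1
  gcongr
  exact_mod_cast Nat.choose_le_pow n (j - 1)

theorem expectedEmptyCuts_le_of_mul_log_le (hj : 1 ≤ j) (hjk : j < k) (hs : 1 ≤ s)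
    (hsn : 2 * s ≤ n) (hkn : 4 * k ≤ n) (hc : 0 ≤ c) (hp1 : p ≤ 1)
    (hp : (j * Real.log n + c) / n.choose (k - j) ≤ p)
    (hsL : s * Real.log n ≤ n) (hkL : k * Real.log n ≤ n) :
    expectedEmptyCuts n k j p s ≤
      Real.exp (-(c * (1 / 4) ^ (k - j))) *
        (Real.exp (j * ((k - j : ℕ) * 2)) ^ s / s.factorial) := by
  refine (expectedEmptyCuts_le hp1 hp).trans ?_
  have hρ := one_div_four_pow_le_choose_div_choose (n := n) (r := j - 1 + s) (t := k - j) (by omega)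
  set ρ : ℝ := (n - (j - 1 + s)).choose (k - j) / n.choose (k - j)
  set a : ℝ := (1 / 4) ^ (k - j)
  set L := Real.log n
  have hn : (0 : ℝ) < n := by exact_mod_cast (by omega : 0 < n)
  have hL : 0 ≤ L := Real.log_natCast_nonneg n
  have hj' : (1 : ℝ) ≤ j := by exact_mod_cast hj
  have hs' : (1 : ℝ) ≤ s := by exact_mod_cast hs
  have hloss : L * (1 - ρ) ≤ (k - j : ℕ) * 2 := by
    refine log_mul_one_sub_choose_div_choose_le (by omega) ?_
    have hsum : ((j - 1 + s : ℕ) + (k - j : ℕ) : ℝ) ≤ s + k := by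
      norm_cast
      omega
    linarith [mul_le_mul_of_nonneg_right hsum hL]
  have hcρ : c * a ≤ c * (s * ρ) := by
    have : a ≤ s * ρ := hρ.trans (le_mul_of_one_le_left ((by positivity : 0 ≤ a).trans hρ) hs')
    gcongr
  have hexponent : (j - 1) * L + s * L - (j * L + c) * (s * ρ) ≤
      -(c * a) + s * (j * ((k - j : ℕ) * 2)) := by
    have hcorner : 0 ≤ (j - 1) * (s - 1) * L :=
      mul_nonneg (mul_nonneg (sub_nonneg.2 hj') (sub_nonneg.2 hs')) hL
    have hjs := mul_le_mul_of_nonneg_left hloss (by positivity : (0 : ℝ) ≤ j * s)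
    linarith
  calc (n : ℝ) ^ (j - 1) * (n ^ s / s.factorial) * Real.exp (-((j * L + c) * (s * ρ)))
      = Real.exp ((j - 1) * L + s * L - (j * L + c) * (s * ρ)) / s.factorial := by
        rw [pow_eq_exp_mul_log hn, pow_eq_exp_mul_log hn, Nat.cast_pred hj,
          sub_eq_add_neg _ (_ * _), Real.exp_add, Real.exp_add]
        ring
    _ ≤ Real.exp (-(c * a) + s * (j * ((k - j : ℕ) * 2))) / s.factorial := by gcongr
    _ = Real.exp (-(c * a)) * (Real.exp (j * ((k - j : ℕ) * 2)) ^ s / s.factorial) := by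
        rw [Real.exp_add, Real.exp_nat_mul, mul_div_assoc]

theorem expectedEmptyCuts_le_inv_sq (hj : 1 ≤ j) (hjk : j < k)
    (hsn : 2 * s ≤ n) (hkn : 4 * k ≤ n) (hc : 0 ≤ c) (hp1 : p ≤ 1)
    (hp : (j * Real.log n + c) / n.choose (k - j) ≤ p)
    (hsL : n ≤ s * Real.log n) (hs : 2 * (j + 1) ≤ (1 / 4) ^ (k - j) * (s : ℝ))
    (hL : Real.exp 1 * Real.log n ≤ (n : ℝ) ^ ((1 / 4 : ℝ) ^ (k - j) / 2)) :
    expectedEmptyCuts n k j p s ≤ ((n : ℝ) ^ 2)⁻¹ := by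
  refine (expectedEmptyCuts_le hp1 hp).trans ?_
  have hρ := one_div_four_pow_le_choose_div_choose (n := n) (r := j - 1 + s) (t := k - j) (by omega)
  set ρ : ℝ := (n - (j - 1 + s)).choose (k - j) / n.choose (k - j)
  set a : ℝ := (1 / 4) ^ (k - j)
  have hn : (0 : ℝ) < n := by exact_mod_cast (by omega : 0 < n)
  have hlog : 0 ≤ Real.log n := Real.log_natCast_nonneg n
  have hj' : (1 : ℝ) ≤ j := by exact_mod_cast hj
  have hsets : (n : ℝ) ^ s / s.factorial ≤ Real.exp (s * (Real.log n * (a / 2))) := by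
    calc (n : ℝ) ^ s / s.factorial ≤ (Real.exp 1 * Real.log n) ^ s :=
          pow_div_factorial_le_of_le_mul hn.le hlog hsL
      _ ≤ ((n : ℝ) ^ (a / 2)) ^ s := by gcongr
      _ = Real.exp (s * (Real.log n * (a / 2))) := by
          rw [Real.rpow_def_of_pos hn, ← Real.exp_nat_mul]
  have hedges : Real.log n * (s * a) ≤ (j * Real.log n + c) * (s * ρ) := by
    have : Real.log n ≤ j * Real.log n + c := by nlinarith
    gcongr
  calc (n : ℝ) ^ (j - 1) * (n ^ s / s.factorial) * Real.exp (-((j * Real.log n + c) * (s * ρ)))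
      ≤ Real.exp ((j - 1) * Real.log n) * Real.exp (s * (Real.log n * (a / 2))) *
          Real.exp (-(Real.log n * (s * a))) := by
        rw [pow_eq_exp_mul_log hn, Nat.cast_pred hj]
        gcongr
    _ = Real.exp ((j - 1) * Real.log n - Real.log n * (a * s) / 2) := by
        rw [← Real.exp_add, ← Real.exp_add]
        ring_nf
    _ ≤ Real.exp (-((2 : ℕ) * Real.log n)) := by
        gcongr
        push_cast
        nlinarith [mul_le_mul_of_nonneg_left hs hlog]
    _ = ((n : ℝ) ^ 2)⁻¹ := by rw [Real.exp_neg, pow_eq_exp_mul_log hn]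

theorem eventually_expectedEmptyCuts_le (hj : 1 ≤ j) (hjk : j < k) :
    ∀ᶠ n : ℕ in atTop, ∀ p c : ℝ, 0 ≤ c → p ≤ 1 →
      (j * Real.log n + c) / n.choose (k - j) ≤ p → ∀ s ∈ Finset.Icc 1 (n / 2),
        expectedEmptyCuts n k j p s ≤ Real.exp (-(c * (1 / 4) ^ (k - j))) *
          (Real.exp (j * ((k - j : ℕ) * 2)) ^ s / s.factorial) + ((n : ℝ) ^ 2)⁻¹ := by
  set a : ℝ := (1 / 4) ^ (k - j)
  have ha : 0 < a := by positivity
  filter_upwards [eventually_ge_atTop (4 * k), eventually_mul_log_le_rpow k one_pos,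
    eventually_mul_log_le_rpow (2 * (j + 1) / a) one_pos,
    eventually_mul_log_le_rpow (Real.exp 1) (half_pos ha)] with n hkn hkL haL hL p c hc hp1 hp s hs
  rw [Real.rpow_one] at hkL haL
  obtain ⟨hs1, hsn⟩ : 1 ≤ s ∧ 2 * s ≤ n := by
    rw [Finset.mem_Icc] at hs
    omega
  rcases le_or_gt (s * Real.log n) n with hsL | hsL
  · exact (expectedEmptyCuts_le_of_mul_log_le hj hjk hs1 hsn hkn hc hp1 hp hsL hkL).trans
      (le_add_of_nonneg_right (by positivity))
  · have hlog : 0 < Real.log n := Real.log_pos (by exact_mod_cast (by omega : 1 < n))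
    have has : 2 * (j + 1) / a ≤ s := le_of_mul_le_mul_right (haL.trans hsL.le) hlog
    rw [div_le_iff₀' ha] at has
    exact (expectedEmptyCuts_le_inv_sq hj hjk hsn hkn hc hp1 hp hsL.le has hL).trans
      (le_add_of_nonneg_left (by positivity))

theorem eventually_le_binomProb_jConnectedHG (hj : 1 ≤ j) (hjk : j < k) :
    ∀ᶠ n : ℕ in atTop, ∀ p c : ℝ, 0 ≤ c → p ≤ 1 →
      (j * Real.log n + c) / n.choose (k - j) ≤ p →
        1 - (Real.exp (-(c * (1 / 4) ^ (k - j))) *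
          Real.exp (Real.exp (j * ((k - j : ℕ) * 2))) + (n : ℝ)⁻¹) ≤
          binomProb n k p (JConnectedHG n j) := by
  filter_upwards [eventually_expectedEmptyCuts_le hj hjk, eventually_gt_atTop j]
    with n hterm hjn p c hc hp1 hp
  set E := Real.exp (j * ((k - j : ℕ) * 2))
  have hp0 : 0 ≤ p := (threshold_nonneg hc).trans hp
  have hexpSeries : ∑ s ∈ Finset.Icc 1 (n / 2), E ^ s / s.factorial ≤ Real.exp E :=
    (Finset.sum_le_sum_of_subset_of_nonneg (t := Finset.range (n + 1))
      (fun s hs => by rw [Finset.mem_Icc] at hs; rw [Finset.mem_range]; omega)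
      fun s _ _ => by positivity).trans (Real.sum_le_exp_of_nonneg (Real.exp_pos _).le _)
  have hcount : (n / 2 : ℕ) * ((n : ℝ) ^ 2)⁻¹ ≤ (n : ℝ)⁻¹ := by
    calc (n / 2 : ℕ) * ((n : ℝ) ^ 2)⁻¹ ≤ n * ((n : ℝ) ^ 2)⁻¹ := by
          gcongr
          exact Nat.div_le_self n 2
      _ = (n : ℝ)⁻¹ := by field_simp
  have hfail : binomProb n k p (fun H => ¬ JConnectedHG n j H) ≤
      Real.exp (-(c * (1 / 4) ^ (k - j))) * Real.exp E + (n : ℝ)⁻¹ := by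
    refine (binomProb_not_jConnectedHG_le_sum hj hjk hjn hp0 hp1).trans
      ((Finset.sum_le_sum (hterm p c hc hp1 hp)).trans ?_)
    rw [Finset.sum_add_distrib, ← Finset.mul_sum, Finset.sum_const, Nat.card_Icc,
      Nat.add_sub_cancel, nsmul_eq_mul]
    gcongr
  rw [binomProb_not] at hfail
  linarith

end Asymptotics

theorem above_threshold_connected_general (k j : ℕ) (hj : 1 ≤ j) (hjk : j < k) (p c : ℕ → ℝ)
    (hp1 : ∀ᶠ n in atTop, p n ≤ 1) (hcinf : Tendsto c atTop atTop)
    (hp : ∀ᶠ n : ℕ in atTop, (j * Real.log n + c n) / n.choose (k - j) ≤ p n) :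
    Tendsto (fun n : ℕ => binomProb n k (p n) (fun H =>
        JConnectedHG n j H ∧ ∀ J : Finset (Fin n), J.card = j → ¬ IsIsolatedSet H J))
      atTop (nhds 1) := by
  simp only [jConnectedHG_and_not_isIsolatedSet_iff]
  have hc0 := hcinf.eventually_ge_atTop 0
  have hexp : Tendsto (fun n => Real.exp (-(c n * (1 / 4) ^ (k - j)))) atTop (nhds 0) :=
    Real.tendsto_exp_neg_atTop_nhds_zero.comp (hcinf.atTop_mul_const (by positivity))
  have herror := ((hexp.mul_const (Real.exp (Real.exp (j * ((k - j : ℕ) * 2))))).add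
    (tendsto_inv_atTop_nhds_zero_nat (𝕜 := ℝ))).const_sub 1
  rw [zero_mul, add_zero, sub_zero] at herror
  refine tendsto_of_tendsto_of_tendsto_of_le_of_le' herror tendsto_const_nhds ?_ ?_
  · filter_upwards [eventually_le_binomProb_jConnectedHG hj hjk, hc0, hp1, hp]
      with n hbound hcn hpn1 hpn using hbound (p n) (c n) hcn hpn1 hpn
  · filter_upwards [hc0, hp1, hp] with n hcn hpn1 hpn
    exact binomProb_le_one ((threshold_nonneg hcn).trans hpn) hpn1 _

/-- **Corollary, part 2.** Let `p = (j log n + c_n)/C(n,k-j)` (a probability). If `c_n → ∞`,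
then with high probability `H^k(n,p)` is `j`-connected, and in particular contains no isolated
`j`-set. -/
theorem above_threshold_connected (k j : ℕ) (hk : 3 ≤ k) (hj : 1 ≤ j) (hjk : j ≤ k - 1)
    (p c : ℕ → ℝ)
    (hp01 : ∀ n : ℕ, 0 ≤ p n ∧ p n ≤ 1)
    (hcinf : Tendsto c atTop atTop)
    (hp : ∀ n : ℕ, p n = ((j : ℝ) * Real.log n + c n) / (n.choose (k - j) : ℝ)) :
    Tendsto (fun n : ℕ => binomProb n k (p n) (fun H =>
        JConnectedHG n j H ∧ ∀ J : Finset (Fin n), J.card = j → ¬ IsIsolatedSet H J))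
      atTop (nhds 1) :=
  above_threshold_connected_general k j hj (by omega) p c (.of_forall fun n => (hp01 n).2)
    hcinf (.of_forall fun n => (hp n).ge)

end
end

section
/- Let k ≥ 3 and 1 ≤ j ≤ k−1 be integers and let s ≥ 1 be an integer. Then the number of well-constructed k-uniform hypergraphs of j-size s, counted up to isomorphism, is at most 2^{k·s²}. -/
noncomputable section

/-- `J` is a discovered `j`-set after the edges in `es` have been added, starting from the
initial `j`-set `J0`: it is a `j`-set which is `J0` itself or lies in one of the edges. -/
def DiscoveredJ {V : Type*} (j : ℕ) (J0 : Finset V) (es : List (Finset V))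
    (J : Finset V) : Prop :=
  J.card = j ∧ (J = J0 ∨ ∃ e ∈ es, J ⊆ e)

/-- The edge `e` is a good step of the search process after the edges `es` (with initial `j`-set
`J0`): it contains at least one previously discovered `j`-set and at least one previously
undiscovered `j`-set. -/
def GoodStep {V : Type*} (j : ℕ) (J0 : Finset V) (es : List (Finset V))
    (e : Finset V) : Prop :=
  (∃ J : Finset V, DiscoveredJ j J0 es J ∧ J ⊆ e) ∧
  (∃ J : Finset V, J ⊆ e ∧ J.card = j ∧ ¬ DiscoveredJ j J0 es J)

/-- A `k`-uniform hypergraph with edge set `H` is well-constructed (with parameter `j`):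
its edges can be ordered so that, starting from some initial `j`-set, each successive edge
contains a previously discovered `j`-set and a previously undiscovered `j`-set. -/
def IsWellConstructed {V : Type*} [DecidableEq V] (j k : ℕ) (H : Finset (Finset V)) : Prop :=
  (∀ e ∈ H, e.card = k) ∧
  ∃ (J0 : Finset V) (l : List (Finset V)), J0.card = j ∧ l.Nodup ∧ l.toFinset = H ∧
    ∀ i : Fin l.length, GoodStep j J0 (l.take i.1) (l.get i)

/-- The `j`-size of a hypergraph with edge set `H`: the number of `j`-sets of vertices
contained in at least one edge. -/
def jSize {m : ℕ} (j : ℕ) (H : Finset (Finset (Fin m))) : ℕ :=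
  ((Finset.powersetCard j (Finset.univ : Finset (Fin m))).filter
    (fun J => ∃ e ∈ H, J ⊆ e)).card

/-!
Each step of the search process discovers a new `j`-set, and these `j`-sets are pairwise distinct,
so a well-constructed hypergraph of `j`-size `s` has at most `s` edges. Listing its edges, with
repetitions if there are fewer than `s`, describes it by `s` of the `2 ^ n` subsets of an `n`-set;
hence there are at most `2 ^ (n * s)` such hypergraphs on `n` labelled vertices.
-/

section Counting

theorem exists_range_eq_coe_of_card_le {α ι : Type*} [Fintype ι] (t : Finset α)
    (hcard : t.card ≤ Fintype.card ι) (hempty : t = ∅ → IsEmpty ι) :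
    ∃ g : ι → α, Set.range g = t := by
  rcases t.eq_empty_or_nonempty with rfl | ht
  · have := hempty rfl
    exact ⟨isEmptyElim, by rw [Set.range_eq_empty, Finset.coe_empty]⟩
  · have : Nonempty t := ht.to_subtype
    obtain ⟨enc⟩ : Nonempty (t ↪ ι) :=
      Function.Embedding.nonempty_of_card_le (by rwa [Fintype.card_coe])
    refine ⟨Subtype.val ∘ Function.invFun enc, ?_⟩
    rw [(Function.invFun_surjective enc.injective).range_comp, Subtype.range_coe]

theorem card_subtype_finset_le_pow {α : Type*} [Fintype α] (s : ℕ) (p : Finset α → Prop)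
    (hcard : ∀ t, p t → t.card ≤ s) (hempty : p ∅ → s = 0) :
    Nat.card {t // p t} ≤ Fintype.card α ^ s := by
  have hrange (t : {t // p t}) : ∃ g : Fin s → α, Set.range g = t.1 :=
    exists_range_eq_coe_of_card_le t.1 (by simpa only [Fintype.card_fin] using hcard t.1 t.2)
      fun ht => hempty (ht ▸ t.2) ▸ Fin.isEmpty
  choose g hg using hrange
  have hinj : Function.Injective g := fun t u htu =>
    Subtype.ext (Finset.coe_injective (by rw [← hg t, ← hg u, htu]))
  simpa using Nat.card_le_card_of_injective g hinj

theorem exists_fin_map_eq_iff_of_card_le {α : Type*} [Finite α] (r : Setoid α) {N : ℕ}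
    (h : Nat.card α ≤ N) : ∃ f : α → Fin N, ∀ a b, f a = f b ↔ r a b := by
  have : Fintype (Quotient r) := Fintype.ofFinite _
  have hcard : Fintype.card (Quotient r) ≤ Fintype.card (Fin N) := by
    rw [← Nat.card_eq_fintype_card, Fintype.card_fin]
    exact (Nat.card_le_card_of_surjective _ Quotient.mk_surjective).trans h
  obtain ⟨F⟩ := Function.Embedding.nonempty_of_card_le hcard
  exact ⟨fun a => F (Quotient.mk r a), fun a b => F.injective.eq_iff.trans Quotient.eq⟩

end Counting

section Hypergraph

variable {V : Type*} [DecidableEq V]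

theorem jSize_eq_card_biUnion {n : ℕ} (j : ℕ) (H : Finset (Finset (Fin n))) :
    jSize j H = (H.biUnion (Finset.powersetCard j)).card := by
  unfold jSize
  congr 1
  ext J
  simp only [Finset.mem_filter, Finset.mem_biUnion, Finset.mem_powersetCard, Finset.subset_univ]
  tauto

theorem IsWellConstructed.card_le_card_biUnion {j k : ℕ} {H : Finset (Finset V)}
    (h : IsWellConstructed j k H) : H.card ≤ (H.biUnion (Finset.powersetCard j)).card := by
  obtain ⟨-, J₀, l, -, hnodup, rfl, hgood⟩ := h
  choose J hJ_subset hJ_card hJ_new using fun i => (hgood i).2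
  have hJ_inj : Function.Injective J := by
    refine Function.Injective.of_lt_imp_ne fun i i' hlt heq => hJ_new i' ⟨hJ_card i', Or.inr ?_⟩
    have hmem : l.get i ∈ l.take i' :=
      List.mem_take_iff_getElem.2 ⟨i, lt_min hlt i.2, rfl⟩
    exact ⟨l.get i, hmem, heq ▸ hJ_subset i⟩
  have hJ_mem (i : Fin l.length) : J i ∈ l.toFinset.biUnion (Finset.powersetCard j) :=
    Finset.mem_biUnion.2 ⟨l.get i, List.mem_toFinset.2 (l.get_mem i),
      Finset.mem_powersetCard.2 ⟨hJ_subset i, hJ_card i⟩⟩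
  calc l.toFinset.card = (Finset.univ : Finset (Fin l.length)).card := by
        rw [List.toFinset_card_of_nodup hnodup, Finset.card_fin]
    _ ≤ _ := Finset.card_le_card_of_injOn J (fun i _ => hJ_mem i) hJ_inj.injOn

theorem card_wellConstructed_le (n k j s : ℕ) :
    Nat.card {H : Finset (Finset (Fin n)) // IsWellConstructed j k H ∧ jSize j H = s} ≤
      2 ^ (n * s) := by
  have hcard (H : Finset (Finset (Fin n))) (hH : IsWellConstructed j k H ∧ jSize j H = s) :
      H.card ≤ s := by
    rw [← hH.2, jSize_eq_card_biUnion]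
    exact hH.1.card_le_card_biUnion
  have hempty (h : IsWellConstructed j k (∅ : Finset (Finset (Fin n))) ∧ jSize (m := n) j ∅ = s) :
      s = 0 := by
    rw [← h.2, jSize_eq_card_biUnion, Finset.biUnion_empty, Finset.card_empty]
  have hcount := card_subtype_finset_le_pow s _ hcard hempty
  rwa [Fintype.card_finset, Fintype.card_fin, ← pow_mul] at hcount

/-- Isomorphism of hypergraphs on the vertex set `V`, encoded as being in the same orbit of
`Equiv.Perm V` acting on edge sets. -/
def isomorphismSetoid (V : Type*) [DecidableEq V] : Setoid (Finset (Finset V)) :=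
  open scoped Pointwise in MulAction.orbitRel (Equiv.Perm V) (Finset (Finset V))

theorem isomorphismSetoid_iff {H₁ H₂ : Finset (Finset V)} :
    isomorphismSetoid V H₁ H₂ ↔
      ∃ π : Equiv.Perm V, H₁.image (fun e => e.image π) = H₂ :=
  -- `π • H` unfolds to `H.image (fun e => e.image π)`, while `orbitRel` relates `π • H` to `H`.
  (isomorphismSetoid V).comm'

theorem wellConstructed_count_general (n k j s : ℕ) :
    ∃ f : {H : Finset (Finset (Fin n)) // IsWellConstructed j k H ∧ jSize j H = s} →
        Fin (2 ^ (n * s)),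
      ∀ H1 H2, (f H1 = f H2 ↔
        ∃ π : Equiv.Perm (Fin n), H1.1.image (fun e => e.image π) = H2.1) := by
  obtain ⟨f, hf⟩ := exists_fin_map_eq_iff_of_card_le
    ((isomorphismSetoid (Fin n)).comap Subtype.val) (card_wellConstructed_le n k j s)
  exact ⟨f, fun H1 H2 => (hf H1 H2).trans isomorphismSetoid_iff⟩

end Hypergraph

/-- **Proposition 6.** For `k ≥ 3`, `1 ≤ j ≤ k-1` and `s ≥ 1`, the number of well-constructed
`k`-uniform hypergraphs of `j`-size `s`, counted up to isomorphism, is at most `2^{k·s²}`.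
(Every such hypergraph has at most `k·s` vertices in its edges, so all isomorphism classes are
represented on the vertex set `Fin (k·s)`; the counting up to isomorphism is expressed by a map
to `Fin (2^{k·s²})` whose fibres are exactly the isomorphism classes.) -/
theorem wellConstructed_count (k j s : ℕ) (hk : 3 ≤ k) (hj : 1 ≤ j) (hjk : j ≤ k - 1)
    (hs : 1 ≤ s) :
    ∃ f : {H : Finset (Finset (Fin (k * s))) // IsWellConstructed j k H ∧ jSize j H = s} →
        Fin (2 ^ (k * s ^ 2)),
      ∀ H1 H2, (f H1 = f H2 ↔
        ∃ π : Equiv.Perm (Fin (k * s)), H1.1.image (fun e => e.image π) = H2.1) := by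
  have h := wellConstructed_count_general (k * s) k j s
  rwa [mul_assoc, ← sq] at h

end
end

section
/- Let k ≥ 3 and 1 ≤ j ≤ k−1 be integers, let ω = log log n, and suppose p satisfies (j·log n − ω)/C(n,k−j) ≤ p ≤ (j·log n + ω)/C(n,k−j). For an integer r with 3 ≤ r ≤ log log n, let X_r be the number of j-components of H^k(n,p) consisting of exactly r j-sets. Then for all sufficiently large n, E(X_r) ≤ n^{−4rj/7}. -/
open Filter Asymptotics

open scoped Classical

noncomputable section

/-!
A `j`-component `C` consisting of `r` sets of size `j` spans a vertex set of some size `v`. Since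
its edges form a walk-connected family in which consecutive edges share `j` vertices, it has `s`
edges with `v ≤ j + (k - j) * s`. With `p ≤ (L / n) ^ (k - j)` for some `L` of order `log n`, the
edges of `C` cost a factor `(L / n) ^ (v - j)`, which against the `n ^ v` choices of the span
leaves `n ^ j` up to a factor `n ^ o(1)`. Moreover no `k`-set containing exactly one member of `C`
is an edge. There are `(1 - o(1)) * r * n.choose (k - j)` such `k`-sets, and their absence costs a
factor `n ^ (-(1 - o(1)) * r * j)`. Thus the expected number of such components is at most
`n ^ (j - (1 - o(1)) * r * j)`.
-/

section RandomSubset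

open Finset

lemma sum_powerset_filter_subset_disjoint_le {α : Type*} [DecidableEq α] {K S B : Finset α}
    {p : ℝ} (hp₀ : 0 ≤ p) (hp₁ : p ≤ 1) (hS : S ⊆ K) (hB : B ⊆ K) :
    ∑ H ∈ K.powerset with S ⊆ H ∧ Disjoint B H, p ^ #H * (1 - p) ^ (#K - #H) ≤
      p ^ #S * (1 - p) ^ #B := by
  calc ∑ H ∈ K.powerset with S ⊆ H ∧ Disjoint B H, p ^ #H * (1 - p) ^ (#K - #H)
      = ∑ H ∈ K.powerset,
          (∏ i ∈ H, if i ∉ B then p else 0) * ∏ i ∈ K \ H, if i ∉ S then 1 - p else 0 := by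
        rw [sum_filter]
        refine sum_congr rfl fun H hH ↦ ?_
        have hSH : S ⊆ H ↔ ∀ i ∈ K \ H, i ∉ S := by
          refine ⟨fun h i hi hiS ↦ (mem_sdiff.mp hi).2 (h hiS), fun h i hiS ↦ ?_⟩
          by_contra hiH
          exact h i (mem_sdiff.mpr ⟨hS hiS, hiH⟩) hiS
        rw [prod_ite_zero, prod_ite_zero, prod_const, prod_const,
          card_sdiff_of_subset (mem_powerset.mp hH), ite_zero_mul_ite_zero]
        simp only [hSH, disjoint_right, and_comm]
    _ = ∏ i ∈ K, ((if i ∉ B then p else 0) + if i ∉ S then 1 - p else 0) := (prod_add ..).symm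
    _ ≤ ∏ i ∈ K, (if i ∈ S then p else 1) * (if i ∈ B then 1 - p else 1) := by
        refine prod_le_prod (fun i _ ↦ ?_) fun i _ ↦ ?_ <;> split_ifs <;> nlinarith
    _ = p ^ #S * (1 - p) ^ #B := by
        rw [prod_mul_distrib, prod_ite_mem, prod_ite_mem, inter_eq_right.mpr hS,
          inter_eq_right.mpr hB, prod_const, prod_const]

variable {n k : ℕ} {p : ℝ}

lemma binomProb_subset_disjoint_le {S B : Finset (Finset (Fin n))} (hp₀ : 0 ≤ p) (hp₁ : p ≤ 1)
    (hS : S ⊆ kSets n k) (hB : B ⊆ kSets n k) :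
    binomProb n k p (fun H ↦ S ⊆ H ∧ Disjoint B H) ≤ p ^ #S * (1 - p) ^ #B := by
  convert sum_powerset_filter_subset_disjoint_le hp₀ hp₁ hS hB
  rw [binomProb, sum_filter]
  congr!

lemma binomProb_le_sum {ι : Type*} {s : Finset ι} {Q : Finset (Finset (Fin n)) → Prop}
    {Q' : ι → Finset (Finset (Fin n)) → Prop} (hp₀ : 0 ≤ p) (hp₁ : p ≤ 1)
    (h : ∀ H ⊆ kSets n k, Q H → ∃ i ∈ s, Q' i H) :
    binomProb n k p Q ≤ ∑ i ∈ s, binomProb n k p (Q' i) := by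
  have hw (m : ℕ) (l : ℕ) : 0 ≤ p ^ m * (1 - p) ^ l :=
    mul_nonneg (pow_nonneg hp₀ _) (pow_nonneg (sub_nonneg.mpr hp₁) _)
  have hnonneg (H : Finset (Finset (Fin n))) (i : ι) :
      0 ≤ if Q' i H then p ^ #H * (1 - p) ^ (#(kSets n k) - #H) else 0 :=
    ite_nonneg (hw _ _) le_rfl
  simp only [binomProb]
  rw [sum_comm]
  refine sum_le_sum fun H hH ↦ ?_
  split_ifs with hQ
  · obtain ⟨i, hi, hQ'⟩ := h H (mem_powerset.mp hH) hQ
    simpa only [if_pos hQ'] using single_le_sum (fun i _ ↦ hnonneg H i) hi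
  · exact sum_nonneg fun i _ ↦ hnonneg H i

lemma binomExp_natCard_subtype {ι : Type*} {s : Finset ι}
    {Q : Finset (Finset (Fin n)) → ι → Prop} (h : ∀ H ⊆ kSets n k, ∀ i, Q H i → i ∈ s) :
    binomExp n k p (fun H ↦ (Nat.card {i // Q H i} : ℝ)) =
      ∑ i ∈ s, binomProb n k p (fun H ↦ Q H i) := by
  simp only [binomExp, binomProb]
  rw [sum_comm]
  refine sum_congr rfl fun H hH ↦ ?_
  have hcard : Nat.card {i // Q H i} = #{i ∈ s | Q H i} :=
    Nat.subtype_card _ fun i ↦ by simpa using h H (mem_powerset.mp hH) i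
  rw [hcard, ← sum_filter, sum_const, nsmul_eq_mul, mul_comm]

end RandomSubset

section SpanBound

open Finset

variable {α : Type*} [DecidableEq α] {j k : ℕ}

lemma card_biUnion_insert_le {S : Finset (Finset α)} {e f : Finset α} (he : e ∈ S)
    (hf : #f ≤ k) (hef : j ≤ #(e ∩ f)) :
    #((insert f S).biUnion id) ≤ #(S.biUnion id) + (k - j) := by
  have hoverlap : e ∩ f ⊆ f ∩ S.biUnion id := by
    rw [inter_comm]
    exact inter_subset_inter_left (subset_biUnion_of_mem id he)
  have hinter := card_le_card hoverlap
  have hunion := card_union_add_card_inter f (S.biUnion id)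
  rw [biUnion_insert, id]
  omega

/- A maximal subfamily of `U` containing `e₀` and satisfying the bound is closed under overlaps,
hence is all of `U`. -/
lemma card_biUnion_le_of_overlap_connected {U : Finset (Finset α)} {e₀ : Finset α} (he₀ : e₀ ∈ U)
    (hcard : ∀ e ∈ U, #e ≤ k)
    (hconn : ∀ e ∈ U, Relation.ReflTransGen (fun e f ↦ f ∈ U ∧ j ≤ #(e ∩ f)) e₀ e) :
    #(U.biUnion id) ≤ j + (k - j) * #U := by
  obtain ⟨S, hS, hmax⟩ := exists_max_image
    {S ∈ U.powerset | e₀ ∈ S ∧ #(S.biUnion id) ≤ j + (k - j) * #S} card ⟨{e₀}, by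
      have := hcard e₀ he₀
      simp only [mem_filter, mem_powerset, singleton_subset_iff, mem_singleton, he₀,
        singleton_biUnion, id, card_singleton, true_and]
      omega⟩
  simp only [mem_filter, mem_powerset] at hS hmax
  obtain ⟨hSU, he₀S, hSspan⟩ := hS
  have hclosed : ∀ e ∈ S, ∀ f ∈ U, j ≤ #(e ∩ f) → f ∈ S := by
    intro e he f hf hef
    by_contra hfS
    have hspan := card_biUnion_insert_le he (hcard f hf) hef
    have hle := hmax (insert f S) ⟨insert_subset hf hSU, mem_insert_of_mem he₀S, by
      rw [card_insert_of_notMem hfS, mul_add_one]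
      omega⟩
    rw [card_insert_of_notMem hfS] at hle
    omega
  have hUS : U ⊆ S := by
    intro e he
    have hwalk := hconn e he
    clear he
    induction hwalk with
    | refl => exact he₀S
    | tail _ hstep ih => exact hclosed _ ih _ hstep.1 hstep.2
  rwa [hSU.antisymm hUS] at hSspan

end SpanBound

section ComponentStructure

open Finset

variable {n k j : ℕ} {H C : Finset (Finset (Fin n))}

/-- The edges of `H` containing a member of `C`; for a `j`-component `C` these are the edges of
the component. -/
def componentEdges (H C : Finset (Finset (Fin n))) : Finset (Finset (Fin n)) :=
  {e ∈ H | ∃ J ∈ C, J ⊆ e}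

/-- The `k`-sets that contain `J` and no other member of `C`; for `J ∈ C` these are the parts into
which `uniqueSupersets` splits for counting. -/
def privateSupersets (n k : ℕ) (C : Finset (Finset (Fin n))) (J : Finset (Fin n)) :
    Finset (Finset (Fin n)) :=
  {e ∈ kSets n k | J ⊆ e ∧ ∀ J' ∈ C, J' ⊆ e → J' = J}

/-- The `k`-sets that contain exactly one member of `C`. None of them is an edge if `C` is a
`j`-component. -/
def uniqueSupersets (n k : ℕ) (C : Finset (Finset (Fin n))) : Finset (Finset (Fin n)) :=
  C.biUnion (privateSupersets n k C)

lemma uniqueSupersets_subset_kSets (C : Finset (Finset (Fin n))) :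
    uniqueSupersets n k C ⊆ kSets n k :=
  biUnion_subset.mpr fun _ _ ↦ filter_subset _ _

lemma exists_card_eq_mem_subset {α : Type*} {e : Finset α} {x : α} (hx : x ∈ e) (hj : 1 ≤ j)
    (hje : j ≤ #e) : ∃ J ⊆ e, #J = j ∧ x ∈ J := by
  obtain ⟨J, hxJ, hJe, hJ⟩ := exists_subsuperset_card_eq (singleton_subset_iff.mpr hx)
    (by rwa [card_singleton]) hje
  exact ⟨J, hJe, hJ, singleton_subset_iff.mp hxJ⟩

namespace IsJComponent

lemma mem_of_subset_edge {e J J' : Finset (Fin n)} (hC : IsJComponent n j H C) (he : e ∈ H)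
    (hJ : J ∈ C) (hJe : J ⊆ e) (hJ'e : J' ⊆ e) (hJ' : #J' = j) : J' ∈ C :=
  hC.2.2.2 J' hJ' ⟨J, hJ, e, he, e, he, hJ'e, hJe, .refl⟩

lemma exists_mem_componentEdges {J : Finset (Fin n)} (hC : IsJComponent n j H C) (hJ : J ∈ C) :
    ∃ e ∈ componentEdges H C, J ⊆ e := by
  obtain ⟨e, he, -, -, hJe, -⟩ := hC.2.2.1 J hJ J hJ
  exact ⟨e, mem_filter.mpr ⟨he, J, hJ, hJe⟩, hJe⟩

lemma mem_componentEdges_of_le_card_inter {e f : Finset (Fin n)} (hC : IsJComponent n j H C)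
    (he : e ∈ componentEdges H C) (hf : f ∈ H) (hef : j ≤ #(e ∩ f)) :
    f ∈ componentEdges H C := by
  obtain ⟨heH, J, hJ, hJe⟩ := mem_filter.mp he
  obtain ⟨J', hJ'ef, hJ'⟩ := exists_subset_card_eq hef
  have hJ'C := hC.mem_of_subset_edge heH hJ hJe (hJ'ef.trans inter_subset_left) hJ'
  exact mem_filter.mpr ⟨hf, J', hJ'C, hJ'ef.trans inter_subset_right⟩

lemma subset_biUnion_of_mem_componentEdges {e : Finset (Fin n)} (hC : IsJComponent n j H C)
    (hj : 1 ≤ j) (he : e ∈ componentEdges H C) : e ⊆ C.biUnion id := by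
  intro x hx
  obtain ⟨heH, J, hJ, hJe⟩ := mem_filter.mp he
  have hje : j ≤ #e := hC.2.1 J hJ ▸ card_le_card hJe
  obtain ⟨J', hJ'e, hJ', hxJ'⟩ := exists_card_eq_mem_subset hx hj hje
  exact mem_biUnion.mpr ⟨J', hC.mem_of_subset_edge heH hJ hJe hJ'e hJ', hxJ'⟩

lemma biUnion_componentEdges (hC : IsJComponent n j H C) (hj : 1 ≤ j) :
    (componentEdges H C).biUnion id = C.biUnion id := by
  refine Subset.antisymm
    (biUnion_subset.mpr fun e he ↦ hC.subset_biUnion_of_mem_componentEdges hj he)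
    (biUnion_subset.mpr fun J hJ ↦ ?_)
  obtain ⟨e, he, hJe⟩ := hC.exists_mem_componentEdges hJ
  exact hJe.trans (subset_biUnion_of_mem id he)

lemma reflTransGen_componentEdges {e f : Finset (Fin n)} (hC : IsJComponent n j H C)
    (he : e ∈ componentEdges H C) (hf : f ∈ componentEdges H C) :
    Relation.ReflTransGen (fun e f ↦ f ∈ componentEdges H C ∧ j ≤ #(e ∩ f)) e f := by
  obtain ⟨-, J, hJ, hJe⟩ := mem_filter.mp he
  obtain ⟨-, J', hJ', hJ'f⟩ := mem_filter.mp hf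
  obtain ⟨e', he', f', -, hJe', hJ'f', hwalk⟩ := hC.2.2.1 J hJ J' hJ'
  have hee' : j ≤ #(e ∩ e') := hC.2.1 J hJ ▸ card_le_card (subset_inter hJe hJe')
  have hff' : j ≤ #(f' ∩ f) := hC.2.1 J' hJ' ▸ card_le_card (subset_inter hJ'f' hJ'f)
  have he'C := hC.mem_componentEdges_of_le_card_inter he he' hee'
  suffices hstart : f' ∈ componentEdges H C ∧
      Relation.ReflTransGen (fun e f ↦ f ∈ componentEdges H C ∧ j ≤ #(e ∩ f)) e f' from
    hstart.2.tail ⟨hf, hff'⟩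
  clear hJ'f' hff'
  induction hwalk with
  | refl => exact ⟨he'C, .single ⟨he'C, hee'⟩⟩
  | tail _ hstep ih =>
    have hmem := hC.mem_componentEdges_of_le_card_inter ih.1 hstep.2.1 hstep.2.2
    exact ⟨hmem, ih.2.tail ⟨hmem, hstep.2.2⟩⟩

lemma card_biUnion_le (hC : IsJComponent n j H C) (hj : 1 ≤ j) (hH : H ⊆ kSets n k) :
    #(C.biUnion id) ≤ j + (k - j) * #(componentEdges H C) := by
  obtain ⟨J, hJ⟩ := hC.1
  obtain ⟨e₀, he₀, -⟩ := hC.exists_mem_componentEdges hJ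
  rw [← hC.biUnion_componentEdges hj]
  exact card_biUnion_le_of_overlap_connected he₀
    (fun e he ↦ (mem_powersetCard.mp (hH (mem_filter.mp he).1)).2.le)
    (fun e he ↦ hC.reflTransGen_componentEdges he₀ he)

lemma disjoint_uniqueSupersets (hC : IsJComponent n j H C) (hj : 1 ≤ j) (hjk : j < k) :
    Disjoint (uniqueSupersets n k C) H := by
  rw [disjoint_left]
  intro e heU heH
  obtain ⟨J, hJ, heJ⟩ := mem_biUnion.mp heU
  obtain ⟨hek, hJe, hunique⟩ := mem_filter.mp heJ
  have hecard : #e = k := (mem_powersetCard.mp hek).2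
  obtain ⟨x, hxe, hxJ⟩ : ∃ x ∈ e, x ∉ J :=
    exists_mem_notMem_of_card_lt_card (by rwa [hC.2.1 J hJ, hecard])
  obtain ⟨J', hJ'e, hJ', hxJ'⟩ := exists_card_eq_mem_subset hxe hj (hecard ▸ hjk.le)
  exact hxJ (hunique J' (hC.mem_of_subset_edge heH hJ hJe hJ'e hJ') hJ'e ▸ hxJ')

end IsJComponent

end ComponentStructure

section Counting

open Finset

variable {n k j : ℕ}

lemma choose_le_choose_sub_add (n j : ℕ) {d : ℕ} (hd : d ≠ 0) :
    n.choose d ≤ (n - j).choose d + j * n ^ (d - 1) := by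
  obtain ⟨d, rfl⟩ := Nat.exists_eq_succ_of_ne_zero hd
  induction j with
  | zero => simp
  | succ i ih =>
    have hstep : (n - i).choose (d + 1) ≤ (n - (i + 1)).choose (d + 1) + n ^ d := by
      rcases Nat.eq_zero_or_eq_succ_pred (n - i) with hi | hi
      · simp [hi]
      · rw [hi, Nat.choose_succ_succ', add_comm, ← Nat.sub_sub, Nat.pred_eq_sub_one]
        gcongr
        exact (Nat.choose_le_pow _ _).trans (Nat.pow_le_pow_left (by omega) d)
    simp only [Nat.add_sub_cancel, Nat.succ_eq_add_one, add_one_mul] at ih ⊢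
    omega

lemma card_filter_subset_subset_le {J J' : Finset (Fin n)} (hJk : #J < k) (hJJ' : ¬ J' ⊆ J) :
    #{e ∈ kSets n k | J ⊆ e ∧ J' ⊆ e} ≤ n ^ (k - #J - 1) := by
  obtain ⟨x, hxJ', hxJ⟩ := not_subset.mp hJJ'
  have hcard : #(insert x J) = #J + 1 := card_insert_of_notMem hxJ
  calc #{e ∈ kSets n k | J ⊆ e ∧ J' ⊆ e}
      ≤ #{e ∈ kSets n k | insert x J ⊆ e} := by
        refine card_le_card fun e he ↦ ?_
        obtain ⟨hek, hJe, hJ'e⟩ := mem_filter.mp he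
        exact mem_filter.mpr ⟨hek, insert_subset (hJ'e hxJ') hJe⟩
    _ = (n - #(insert x J)).choose (k - #(insert x J)) := by
        rw [kSets, card_filter_powersetCard_subset _ _ _ (subset_univ _) (by omega), card_univ,
          Fintype.card_fin]
    _ ≤ n ^ (k - #(insert x J)) :=
        (Nat.choose_le_pow _ _).trans (Nat.pow_le_pow_left (Nat.sub_le _ _) _)
    _ = n ^ (k - #J - 1) := by rw [hcard, Nat.sub_sub]

lemma choose_le_card_privateSupersets_add {C : Finset (Finset (Fin n))} {J : Finset (Fin n)}
    (hJk : #J < k) (hC : ∀ J' ∈ C, #J' = #J) :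
    n.choose (k - #J) ≤ #(privateSupersets n k C J) + (#J + #C) * n ^ (k - #J - 1) := by
  have hcover : {e ∈ kSets n k | J ⊆ e} ⊆ privateSupersets n k C J ∪
      (C.erase J).biUnion fun J' ↦ {e ∈ kSets n k | J ⊆ e ∧ J' ⊆ e} := by
    intro e he
    obtain ⟨hek, hJe⟩ := mem_filter.mp he
    by_cases hunique : ∀ J' ∈ C, J' ⊆ e → J' = J
    · exact mem_union_left _ (mem_filter.mpr ⟨hek, hJe, hunique⟩)
    · push Not at hunique
      obtain ⟨J', hJ', hJ'e, hne⟩ := hunique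
      exact mem_union_right _ (mem_biUnion.mpr
        ⟨J', mem_erase.mpr ⟨hne, hJ'⟩, mem_filter.mpr ⟨hek, hJe, hJ'e⟩⟩)
  have hshared : #((C.erase J).biUnion fun J' ↦ {e ∈ kSets n k | J ⊆ e ∧ J' ⊆ e}) ≤
      #C * n ^ (k - #J - 1) := by
    refine (card_biUnion_le_card_mul _ _ _ fun J' hJ' ↦ ?_).trans
      (Nat.mul_le_mul_right _ (card_le_card (erase_subset J C)))
    obtain ⟨hne, hJ'C⟩ := mem_erase.mp hJ'
    exact card_filter_subset_subset_le hJk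
      fun hsub ↦ hne (eq_of_subset_of_card_le hsub (hC J' hJ'C).ge)
  calc n.choose (k - #J)
      ≤ (n - #J).choose (k - #J) + #J * n ^ (k - #J - 1) :=
        choose_le_choose_sub_add n #J (by omega)
    _ = #{e ∈ kSets n k | J ⊆ e} + #J * n ^ (k - #J - 1) := by
        rw [kSets, card_filter_powersetCard_subset _ _ _ (subset_univ _) hJk.le, card_univ,
          Fintype.card_fin]
    _ ≤ #(privateSupersets n k C J) + #C * n ^ (k - #J - 1) + #J * n ^ (k - #J - 1) := by
        gcongr
        exact (card_le_card hcover).trans ((card_union_le _ _).trans (by gcongr))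
    _ = #(privateSupersets n k C J) + (#J + #C) * n ^ (k - #J - 1) := by ring

lemma pairwiseDisjoint_privateSupersets (C : Finset (Finset (Fin n))) :
    (C : Set (Finset (Fin n))).PairwiseDisjoint (privateSupersets n k C) := by
  intro J hJ J' _ hne
  refine disjoint_left.mpr fun e he he' ↦ hne ?_
  exact (mem_filter.mp he').2.2 J hJ (mem_filter.mp he).2.1

lemma card_mul_choose_le_card_uniqueSupersets_add {C : Finset (Finset (Fin n))} (hjk : j < k)
    (hC : ∀ J ∈ C, #J = j) :
    #C * n.choose (k - j) ≤
      #(uniqueSupersets n k C) + #C * ((j + #C) * n ^ (k - j - 1)) := by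
  rw [uniqueSupersets, card_biUnion (pairwiseDisjoint_privateSupersets C), ← smul_eq_mul,
    ← smul_eq_mul (#C) ((j + #C) * _), ← sum_const, ← sum_const, ← sum_add_distrib]
  refine sum_le_sum fun J hJ ↦ ?_
  obtain rfl := hC J hJ
  exact choose_le_card_privateSupersets_add hjk hC

lemma card_filter_card_biUnion_eq_le {α : Type*} [Fintype α] [DecidableEq α] (j v : ℕ) :
    #{C ∈ ((univ : Finset α).powersetCard j).powerset | #(C.biUnion id) = v} ≤
      (Fintype.card α).choose v * 2 ^ v.choose j := by
  calc #{C ∈ ((univ : Finset α).powersetCard j).powerset | #(C.biUnion id) = v}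
      ≤ #(((univ : Finset α).powersetCard v).biUnion fun V ↦ (V.powersetCard j).powerset) := by
        refine card_le_card fun C hC ↦ ?_
        obtain ⟨hCj, hCv⟩ := mem_filter.mp hC
        refine mem_biUnion.mpr ⟨C.biUnion id, mem_powersetCard.mpr ⟨subset_univ _, hCv⟩,
          mem_powerset.mpr fun J hJ ↦ mem_powersetCard.mpr ⟨subset_biUnion_of_mem id hJ, ?_⟩⟩
        exact (mem_powersetCard.mp (mem_powerset.mp hCj hJ)).2
    _ ≤ #((univ : Finset α).powersetCard v) * 2 ^ v.choose j := by
        refine card_biUnion_le_card_mul _ _ _ fun V hV ↦ ?_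
        rw [card_powerset, card_powersetCard, (mem_powersetCard.mp hV).2]
    _ = (Fintype.card α).choose v * 2 ^ v.choose j := by rw [card_powersetCard, card_univ]

lemma sum_powersetCard_powersetCard_le {α : Type*} [Fintype α] [DecidableEq α] {r : ℕ}
    {f : ℕ → ℝ} (hf : ∀ v, 0 ≤ f v) (hr : 1 ≤ r) :
    ∑ C ∈ ((univ : Finset α).powersetCard j).powersetCard r, f #(C.biUnion id) ≤
      ∑ v ∈ Icc j (r * j), (Fintype.card α).choose v * 2 ^ v.choose j * f v := by
  have hmaps : ∀ C ∈ ((univ : Finset α).powersetCard j).powersetCard r,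
      #(C.biUnion id) ∈ Icc j (r * j) := by
    intro C hC
    obtain ⟨hCj, rfl⟩ := mem_powersetCard.mp hC
    have hcard : ∀ J ∈ C, #J = j := fun J hJ ↦ (mem_powersetCard.mp (hCj hJ)).2
    obtain ⟨J, hJ⟩ := card_pos.mp hr
    exact mem_Icc.mpr ⟨hcard J hJ ▸ card_le_card (subset_biUnion_of_mem id hJ),
      card_biUnion_le_card_mul _ _ _ fun J hJ ↦ (hcard J hJ).le⟩
  rw [← sum_fiberwise_of_maps_to hmaps]
  refine sum_le_sum fun v _ ↦ ?_
  rw [sum_congr rfl fun C hC ↦ congrArg f (mem_filter.mp hC).2, sum_const, nsmul_eq_mul]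
  refine mul_le_mul_of_nonneg_right ?_ (hf v)
  have hsub : (univ.powersetCard j).powersetCard r ⊆ ((univ : Finset α).powersetCard j).powerset :=
    fun C hC ↦ mem_powerset.mpr (mem_powersetCard.mp hC).1
  exact_mod_cast (card_le_card (filter_subset_filter _ hsub)).trans
    (card_filter_card_biUnion_eq_le j v)

end Counting

section FirstMoment

open Finset

variable {n k j r : ℕ} {p x : ℝ}

lemma binomProb_isJComponent_le {C : Finset (Finset (Fin n))} (hj : 1 ≤ j) (hjk : j < k)
    (hp₀ : 0 ≤ p) (hx₀ : 0 ≤ x) (hx₁ : x ≤ 1) (hpx : p ≤ x ^ (k - j)) :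
    binomProb n k p (fun H ↦ IsJComponent n j H C) ≤
      2 ^ (#(C.biUnion id)).choose k * x ^ (#(C.biUnion id) - j) *
        (1 - p) ^ #(uniqueSupersets n k C) := by
  have hp₁ : p ≤ 1 := hpx.trans (pow_le_one₀ hx₀ hx₁)
  set V := C.biUnion id
  set 𝒮 : Finset (Finset (Finset (Fin n))) :=
    {S ∈ (V.powersetCard k).powerset | #V ≤ j + (k - j) * #S}
  have hunion : ∀ H ⊆ kSets n k, IsJComponent n j H C →
      ∃ S ∈ 𝒮, S ⊆ H ∧ Disjoint (uniqueSupersets n k C) H := by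
    intro H hH hC
    refine ⟨componentEdges H C, mem_filter.mpr ⟨mem_powerset.mpr fun e he ↦ ?_,
      hC.card_biUnion_le hj hH⟩, filter_subset _ _, hC.disjoint_uniqueSupersets hj hjk⟩
    exact mem_powersetCard.mpr ⟨hC.subset_biUnion_of_mem_componentEdges hj he,
      (mem_powersetCard.mp (hH (mem_filter.mp he).1)).2⟩
  have hprob : ∀ S ∈ 𝒮, binomProb n k p
      (fun H ↦ S ⊆ H ∧ Disjoint (uniqueSupersets n k C) H) ≤
        x ^ (#V - j) * (1 - p) ^ #(uniqueSupersets n k C) := by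
    intro S hS
    obtain ⟨hSV, hspan⟩ := mem_filter.mp hS
    have hSk : S ⊆ kSets n k :=
      (mem_powerset.mp hSV).trans (powersetCard_mono (subset_univ V))
    refine (binomProb_subset_disjoint_le hp₀ hp₁ hSk (uniqueSupersets_subset_kSets C)).trans
      (mul_le_mul_of_nonneg_right ?_ (pow_nonneg (sub_nonneg.mpr hp₁) _))
    calc p ^ #S ≤ (x ^ (k - j)) ^ #S := pow_le_pow_left₀ hp₀ hpx _
      _ = x ^ ((k - j) * #S) := (pow_mul _ _ _).symm
      _ ≤ x ^ (#V - j) := pow_le_pow_of_le_one hx₀ hx₁ (by omega)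
  have hcard : (#𝒮 : ℝ) ≤ 2 ^ (#V).choose k := by
    have h𝒮 : #𝒮 ≤ #(V.powersetCard k).powerset := card_filter_le _ _
    rw [card_powerset, card_powersetCard] at h𝒮
    exact_mod_cast h𝒮
  calc binomProb n k p (fun H ↦ IsJComponent n j H C)
      ≤ ∑ S ∈ 𝒮, binomProb n k p (fun H ↦ S ⊆ H ∧ Disjoint (uniqueSupersets n k C) H) :=
        binomProb_le_sum hp₀ hp₁ hunion
    _ ≤ #𝒮 * (x ^ (#V - j) * (1 - p) ^ #(uniqueSupersets n k C)) := by
        simpa only [nsmul_eq_mul] using sum_le_card_nsmul _ _ _ hprob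
    _ ≤ 2 ^ (#V).choose k * (x ^ (#V - j) * (1 - p) ^ #(uniqueSupersets n k C)) := by
        have := sub_nonneg.mpr hp₁
        gcongr
    _ = _ := (mul_assoc _ _ _).symm

lemma one_sub_pow_card_uniqueSupersets_le {C : Finset (Finset (Fin n))} (hjk : j < k)
    (hp₀ : 0 ≤ p) (hp₁ : p ≤ 1) (hC : ∀ J ∈ C, #J = j) :
    (1 - p) ^ #(uniqueSupersets n k C) ≤
      Real.exp (-(p * (#C * (n.choose (k - j) - (j + #C) * n ^ (k - j - 1))))) := by
  have hcount : (#C * n.choose (k - j) : ℝ) ≤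
      #(uniqueSupersets n k C) + #C * ((j + #C) * n ^ (k - j - 1)) := by
    exact_mod_cast card_mul_choose_le_card_uniqueSupersets_add hjk hC
  calc (1 - p) ^ #(uniqueSupersets n k C)
      ≤ Real.exp (-p) ^ #(uniqueSupersets n k C) :=
        pow_le_pow_left₀ (sub_nonneg.mpr hp₁) (Real.one_sub_le_exp_neg p) _
    _ = Real.exp (-(p * #(uniqueSupersets n k C))) := by
        rw [← Real.exp_nat_mul, mul_neg, mul_comm]
    _ ≤ _ := by
        gcongr
        linarith

lemma choose_mul_two_pow_mul_le {v m : ℕ} (hj : 1 ≤ j) (hjk : j ≤ k) (hjv : j ≤ v) (hvm : v ≤ m)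
    (hx₀ : 0 ≤ x) (hnx : 1 ≤ n * x) :
    (n.choose v * 2 ^ v.choose j : ℝ) * (2 ^ v.choose k * x ^ (v - j)) ≤
      4 ^ m ^ k * n ^ j * (n * x) ^ m := by
  have hchoose (i : ℕ) (hik : i ≤ k) : (2 : ℝ) ^ v.choose i ≤ 2 ^ m ^ k := by
    refine pow_le_pow_right₀ one_le_two ?_
    calc v.choose i ≤ v ^ i := Nat.choose_le_pow v i
      _ ≤ m ^ i := Nat.pow_le_pow_left hvm i
      _ ≤ m ^ k := Nat.pow_le_pow_right (by omega) hik
  calc (n.choose v * 2 ^ v.choose j : ℝ) * (2 ^ v.choose k * x ^ (v - j))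
      ≤ (n ^ v * 2 ^ m ^ k) * (2 ^ m ^ k * x ^ (v - j)) := by
        gcongr ?_ * ?_ * (?_ * _)
        · exact_mod_cast Nat.choose_le_pow n v
        · exact hchoose j hjk
        · exact hchoose k le_rfl
    _ = 4 ^ m ^ k * n ^ j * (n * x) ^ (v - j) := by
        have hnv : (n : ℝ) ^ v = n ^ j * n ^ (v - j) := by rw [← pow_add, Nat.add_sub_cancel' hjv]
        have hfour : (4 : ℝ) ^ m ^ k = 2 ^ m ^ k * 2 ^ m ^ k := by rw [← mul_pow]; norm_num
        rw [hnv, hfour, mul_pow]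
        ring
    _ ≤ 4 ^ m ^ k * n ^ j * (n * x) ^ m := by
        gcongr
        omega

lemma binomExp_natCard_isJComponent_le (hj : 1 ≤ j) (hjk : j < k) (hr : 1 ≤ r) (hp₀ : 0 ≤ p)
    (hx₀ : 0 ≤ x) (hx₁ : x ≤ 1) (hnx : 1 ≤ n * x) (hpx : p ≤ x ^ (k - j)) :
    binomExp n k p (fun H ↦
        (Nat.card {C : Finset (Finset (Fin n)) // IsJComponent n j H C ∧ C.card = r} : ℝ)) ≤
      (r * j + 1) * 4 ^ (r * j) ^ k * n ^ j * (n * x) ^ (r * j) *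
        Real.exp (-(p * (r * (n.choose (k - j) - (j + r) * n ^ (k - j - 1))))) := by
  set Q := Real.exp (-(p * (r * (n.choose (k - j) - (j + r) * n ^ (k - j - 1)))))
  have hp₁ : p ≤ 1 := hpx.trans (pow_le_one₀ hx₀ hx₁)
  have hprob : ∀ C ∈ ((univ : Finset (Fin n)).powersetCard j).powersetCard r,
      binomProb n k p (fun H ↦ IsJComponent n j H C ∧ #C = r) ≤
        2 ^ (#(C.biUnion id)).choose k * x ^ (#(C.biUnion id) - j) * Q := by
    intro C hC
    obtain ⟨hCj, hCr⟩ := mem_powersetCard.mp hC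
    have hQ := one_sub_pow_card_uniqueSupersets_le hjk hp₀ hp₁
      fun J hJ ↦ (mem_powersetCard.mp (hCj hJ)).2
    rw [hCr] at hQ
    simp only [hCr, and_true]
    exact (binomProb_isJComponent_le hj hjk hp₀ hx₀ hx₁ hpx).trans (by gcongr)
  calc _ = ∑ C ∈ ((univ : Finset (Fin n)).powersetCard j).powersetCard r,
        binomProb n k p (fun H ↦ IsJComponent n j H C ∧ #C = r) :=
        binomExp_natCard_subtype fun H _ C hC ↦ mem_powersetCard.mpr
          ⟨fun J hJ ↦ mem_powersetCard.mpr ⟨subset_univ J, hC.1.2.1 J hJ⟩, hC.2⟩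
    _ ≤ ∑ v ∈ Icc j (r * j), n.choose v * 2 ^ v.choose j * (2 ^ v.choose k * x ^ (v - j) * Q) :=
        (sum_le_sum hprob).trans (by
          simpa only [Fintype.card_fin] using sum_powersetCard_powersetCard_le (α := Fin n)
            (f := fun v ↦ 2 ^ v.choose k * x ^ (v - j) * Q) (fun v ↦ by positivity) hr)
    _ ≤ #(Icc j (r * j)) * (4 ^ (r * j) ^ k * n ^ j * (n * x) ^ (r * j) * Q) := by
        rw [← nsmul_eq_mul]
        refine sum_le_card_nsmul _ _ _ fun v hv ↦ ?_
        obtain ⟨hjv, hvm⟩ := mem_Icc.mp hv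
        rw [← mul_assoc]
        exact mul_le_mul_of_nonneg_right (choose_mul_two_pow_mul_le hj hjk.le hjv hvm hx₀ hnx)
          (Real.exp_pos _).le
    _ ≤ (r * j + 1) * (4 ^ (r * j) ^ k * n ^ j * (n * x) ^ (r * j) * Q) := by
        gcongr
        have hcard : #(Icc j (r * j)) ≤ r * j + 1 := by rw [Nat.card_Icc]; omega
        exact_mod_cast hcard
    _ = _ := by ring

end FirstMoment

section LogarithmicScale

variable {n k j r : ℕ} {p L ε : ℝ}

lemma succ_mul_four_pow_mul_pow_le_exp (hL : 0 < L) (m k : ℕ) :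
    (m + 1) * 4 ^ m ^ k * L ^ m ≤ Real.exp (m * (1 + Real.log L) + 2 * m ^ k) := by
  have hfour : (4 : ℝ) ≤ Real.exp 2 := by
    have htwo := Real.add_one_le_exp (1 : ℝ)
    calc (4 : ℝ) = 2 * 2 := by norm_num
      _ ≤ Real.exp 1 * Real.exp 1 := by gcongr <;> linarith
      _ = Real.exp 2 := by rw [← Real.exp_add]; norm_num
  calc (m + 1) * 4 ^ m ^ k * L ^ m
      ≤ Real.exp m * Real.exp 2 ^ m ^ k * Real.exp (Real.log L) ^ m := by
        rw [Real.exp_log hL]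
        gcongr
        exact Real.add_one_le_exp _
    _ = Real.exp (m * (1 + Real.log L) + 2 * m ^ k) := by
        rw [← Real.exp_nat_mul, ← Real.exp_nat_mul, ← Real.exp_add, ← Real.exp_add]
        push_cast
        congr 1
        ring

/- Each of the five error terms is at most `r * j * (ε / 5) * y`. -/
lemma first_moment_exponent_le {y B N : ℝ} (hj : 1 ≤ j) (hr : 1 ≤ r) (hp₀ : 0 ≤ p) (hN : 0 ≤ N)
    (hL : 1 + Real.log L ≤ ε / 5 * y) (hrk : 2 * (r * j : ℝ) ^ k ≤ ε / 5 * y)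
    (hjr : (j + r : ℝ) ≤ 2 * y) (hpB : (j - ε / 5) * y ≤ p * B) (hpN : p * N ≤ ε / 5) :
    r * j * (1 + Real.log L) + 2 * (r * j : ℝ) ^ k + j * y - p * (r * (B - (j + r) * N)) ≤
      y * (j * (1 - (1 - ε) * r)) := by
  have hj' : (1 : ℝ) ≤ j := mod_cast hj
  have hr' : (1 : ℝ) ≤ r := mod_cast hr
  have hδy : 0 ≤ ε / 5 * y := le_trans (by positivity) hrk
  have hlog : r * j * (1 + Real.log L) ≤ r * j * (ε / 5 * y) := by gcongr
  have hloss : (j + r) * (p * N) ≤ 2 * y * (ε / 5) := by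
    have : 0 ≤ p * N := mul_nonneg hp₀ hN
    gcongr
    linarith
  have hmain : r * ((j - ε / 5) * y - 2 * y * (ε / 5)) ≤ r * (p * B - (j + r) * (p * N)) := by
    gcongr
  have hsmall : ε / 5 * y ≤ r * (ε / 5 * y) := le_mul_of_one_le_left hδy hr'
  have hsmall' : r * (ε / 5 * y) ≤ r * j * (ε / 5 * y) := by
    rw [mul_right_comm]
    exact le_mul_of_one_le_right (by positivity) hj'
  linarith

lemma binomExp_natCard_isJComponent_le_rpow (hj : 1 ≤ j) (hjk : j < k) (hr : 1 ≤ r) (hp₀ : 0 ≤ p)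
    (hL₁ : 1 ≤ L) (hLn : L ≤ n) (hpL : p ≤ (L / n) ^ (k - j))
    (hL : 1 + Real.log L ≤ ε / 5 * Real.log n)
    (hrk : 2 * (r * j : ℝ) ^ k ≤ ε / 5 * Real.log n) (hjr : (j + r : ℝ) ≤ 2 * Real.log n)
    (hpB : (j - ε / 5) * Real.log n ≤ p * n.choose (k - j))
    (hpN : p * n ^ (k - j - 1) ≤ ε / 5) :
    binomExp n k p (fun H ↦
        (Nat.card {C : Finset (Finset (Fin n)) // IsJComponent n j H C ∧ C.card = r} : ℝ)) ≤
      (n : ℝ) ^ (j * (1 - (1 - ε) * r)) := by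
  have hn : (0 : ℝ) < n := by linarith
  have hL₀ : 0 < L := by linarith
  have hx : n * (L / n) = L := mul_div_cancel₀ _ hn.ne'
  set Q := Real.exp (-(p * (r * (n.choose (k - j) - (j + r) * n ^ (k - j - 1)))))
  calc _ ≤ (r * j + 1) * 4 ^ (r * j) ^ k * n ^ j * L ^ (r * j) * Q := by
        have hle := binomExp_natCard_isJComponent_le hj hjk hr hp₀ (by positivity)
          ((div_le_one hn).mpr hLn) (hL₁.trans_eq hx.symm) hpL
        rwa [hx] at hle
    _ ≤ Real.exp (r * j * (1 + Real.log L) + 2 * (r * j : ℝ) ^ k) * Real.exp (j * Real.log n) *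
        Q := by
        rw [Real.exp_nat_mul, Real.exp_log hn, mul_right_comm _ _ (_ ^ (r * j))]
        gcongr
        exact_mod_cast succ_mul_four_pow_mul_pow_le_exp hL₀ (r * j) k
    _ ≤ Real.exp (Real.log n * (j * (1 - (1 - ε) * r))) := by
        rw [← Real.exp_add, ← Real.exp_add, ← sub_eq_add_neg]
        exact Real.exp_le_exp.mpr
          (first_moment_exponent_le hj hr hp₀ (by positivity) hL hrk hjr hpB hpN)
    _ = (n : ℝ) ^ (j * (1 - (1 - ε) * r)) := (Real.rpow_def_of_pos hn _).symm

end LogarithmicScale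

section Asymptotic

variable {k j d : ℕ} {p : ℕ → ℝ} {a δ : ℝ}

lemma tendsto_log_natCast_atTop : Tendsto (fun n : ℕ ↦ Real.log n) atTop atTop :=
  Real.tendsto_log_atTop.comp tendsto_natCast_atTop_atTop

lemma isEquivalent_mul_choose_of_window (ha : a ≠ 0) {ω : ℕ → ℝ}
    (hω : ω =o[atTop] fun n : ℕ ↦ Real.log n)
    (hp : ∀ᶠ n : ℕ in atTop, (a * Real.log n - ω n) / (n.choose d : ℝ) ≤ p n ∧
      p n ≤ (a * Real.log n + ω n) / (n.choose d : ℝ)) :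
    (fun n ↦ p n * n.choose d) ~[atTop] fun n : ℕ ↦ a * Real.log n := by
  have hdiff : (fun n : ℕ ↦ p n * n.choose d - a * Real.log n) =O[atTop] ω := by
    refine .of_bound' ?_
    filter_upwards [hp, eventually_ge_atTop d] with n ⟨hlower, hupper⟩ hn
    have hchoose : (0 : ℝ) < n.choose d := mod_cast Nat.choose_pos hn
    rw [div_le_iff₀ hchoose] at hlower
    rw [le_div_iff₀ hchoose] at hupper
    refine le_trans ?_ (le_abs_self (ω n))
    exact abs_le.mpr ⟨by linarith, by linarith⟩
  exact (hdiff.trans_isLittleO hω).trans_isBigO (isBigO_self_const_mul ha _ _)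

lemma isLittleO_log_log_pow_log (k : ℕ) :
    (fun n : ℕ ↦ Real.log (Real.log n) ^ k) =o[atTop] fun n : ℕ ↦ Real.log n :=
  Real.isLittleO_pow_log_id_atTop.comp_tendsto tendsto_log_natCast_atTop

lemma isBigO_log_div_pow_of_mul_choose
    (hp : (fun n ↦ p n * n.choose d) =O[atTop] fun n : ℕ ↦ Real.log n) :
    p =O[atTop] fun n : ℕ ↦ Real.log n / n ^ d := by
  refine (hp.mul (isTheta_choose d).inv.isBigO).congr' ?_ ?_
  · filter_upwards [eventually_ge_atTop d] with n hn
    have hchoose : (n.choose d : ℝ) ≠ 0 := mod_cast (Nat.choose_pos hn).ne'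
    exact mul_inv_cancel_right₀ hchoose (p n)
  · exact .of_forall fun n ↦ (div_eq_mul_inv _ _).symm

lemma exists_eventually_le_log_div_pow (hd : d ≠ 0)
    (hp : p =O[atTop] fun n : ℕ ↦ Real.log n / n ^ d) :
    ∃ c : ℝ, 1 ≤ c ∧ ∀ᶠ n : ℕ in atTop, p n ≤ (c * Real.log n / n) ^ d := by
  obtain ⟨c, hbound⟩ := hp.bound
  refine ⟨max c 1, le_max_right c 1, ?_⟩
  filter_upwards [hbound, tendsto_log_natCast_atTop.eventually_ge_atTop 1] with n hn hlog
  have hone : 1 ≤ max c 1 * Real.log n := one_le_mul_of_one_le_of_one_le (le_max_right c 1) hlog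
  calc p n ≤ c * (Real.log n / n ^ d) := by
        refine (le_abs_self (p n)).trans (hn.trans_eq ?_)
        rw [Real.norm_of_nonneg (by positivity)]
    _ ≤ max c 1 * (Real.log n / n ^ d) := by
        gcongr
        exact le_max_left c 1
    _ = max c 1 * Real.log n / n ^ d := (mul_div_assoc _ _ _).symm
    _ ≤ (max c 1 * Real.log n) ^ d / n ^ d := by
        gcongr
        exact le_self_pow₀ hone hd
    _ = (max c 1 * Real.log n / n) ^ d := (div_pow _ _ _).symm

lemma tendsto_mul_pow_pred_zero (hd : d ≠ 0)
    (hp : p =O[atTop] fun n : ℕ ↦ Real.log n / n ^ d) :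
    Tendsto (fun n ↦ p n * n ^ (d - 1)) atTop (nhds 0) := by
  have hlog : Tendsto (fun n : ℕ ↦ Real.log n / n) atTop (nhds 0) :=
    (Real.isLittleO_log_id_atTop.comp_tendsto tendsto_natCast_atTop_atTop).tendsto_div_nhds_zero
  refine ((hp.mul (isBigO_refl (fun n : ℕ ↦ (n : ℝ) ^ (d - 1)) atTop)).congr' .rfl
    ?_).trans_tendsto hlog
  filter_upwards [eventually_ne_atTop 0] with n hn
  obtain ⟨d, rfl⟩ := Nat.exists_eq_succ_of_ne_zero hd
  have hn' : (n : ℝ) ≠ 0 := mod_cast hn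
  rw [Nat.succ_eq_add_one, Nat.add_sub_cancel, pow_succ]
  field_simp

lemma isLittleO_one_add_log_mul_log {c : ℝ} (hc : 0 < c) :
    (fun n : ℕ ↦ 1 + Real.log (c * Real.log n)) =o[atTop] fun n : ℕ ↦ Real.log n := by
  have hscale : (fun y ↦ Real.log (c * y)) =o[atTop] fun y ↦ y :=
    (Real.isLittleO_log_id_atTop.comp_tendsto (tendsto_id.const_mul_atTop hc)).trans_isBigO
      (isBigO_const_mul_self c id atTop)
  exact ((isLittleO_const_id_atTop 1).add hscale).comp_tendsto tendsto_log_natCast_atTop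

lemma eventually_sub_mul_log_le_mul_choose (ha : 0 < a) (hδ : 0 < δ)
    (hp : (fun n ↦ p n * n.choose d) ~[atTop] fun n : ℕ ↦ a * Real.log n) :
    ∀ᶠ n : ℕ in atTop, (a - δ) * Real.log n ≤ p n * n.choose d := by
  filter_upwards [hp.isLittleO.def (div_pos hδ ha),
    tendsto_log_natCast_atTop.eventually_ge_atTop 0] with n hn hlog
  rw [Real.norm_of_nonneg (mul_nonneg ha.le hlog), ← mul_assoc, div_mul_cancel₀ _ ha.ne'] at hn
  have hlower : -(δ * Real.log n) ≤ p n * n.choose d - a * Real.log n := (abs_le.mp hn).1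
  linarith

lemma eventually_nonneg_of_mul_choose_isEquivalent (ha : 0 < a)
    (hp : (fun n ↦ p n * n.choose d) ~[atTop] fun n : ℕ ↦ a * Real.log n) :
    ∀ᶠ n : ℕ in atTop, 0 ≤ p n := by
  filter_upwards [eventually_sub_mul_log_le_mul_choose ha ha hp, eventually_ge_atTop d]
    with n hn hdn
  rw [sub_self, zero_mul] at hn
  exact nonneg_of_mul_nonneg_left hn (mod_cast Nat.choose_pos hdn)

lemma eventually_forall_natCast_pow_le {R : ℕ → ℝ}
    (hR : (fun n ↦ R n ^ k) =o[atTop] fun n : ℕ ↦ Real.log n) (hδ : 0 < δ) :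
    ∀ᶠ n : ℕ in atTop, ∀ r : ℕ, (r : ℝ) ≤ R n → (r : ℝ) ^ k ≤ δ * Real.log n := by
  filter_upwards [hR.def hδ, tendsto_log_natCast_atTop.eventually_ge_atTop 0] with n hn hlog r hr
  rw [Real.norm_of_nonneg hlog] at hn
  exact (pow_le_pow_left₀ r.cast_nonneg hr k).trans ((le_abs_self _).trans hn)

lemma eventually_mul_log_le_natCast (c : ℝ) : ∀ᶠ n : ℕ in atTop, c * Real.log n ≤ n := by
  filter_upwards [((Real.isLittleO_log_id_atTop.comp_tendsto
    tendsto_natCast_atTop_atTop).const_mul_left c).def one_pos] with n hn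
  simpa using (le_abs_self _).trans hn

theorem small_component_expectation_general (hj : 1 ≤ j) (hjk : j < k)
    (hp : (fun n ↦ p n * n.choose (k - j)) ~[atTop] fun n : ℕ ↦ j * Real.log n)
    {R : ℕ → ℝ} (hR : (fun n ↦ R n ^ k) =o[atTop] fun n : ℕ ↦ Real.log n) {ε : ℝ} (hε : 0 < ε) :
    ∀ᶠ n : ℕ in atTop, ∀ r : ℕ, 1 ≤ r → (r : ℝ) ≤ R n →
      binomExp n k (p n) (fun H ↦
          (Nat.card {C : Finset (Finset (Fin n)) // IsJComponent n j H C ∧ C.card = r} : ℝ)) ≤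
        (n : ℝ) ^ (j * (1 - (1 - ε) * r)) := by
  have hd : k - j ≠ 0 := by omega
  have hj' : (0 : ℝ) < j := mod_cast hj
  have hδ : 0 < ε / 5 := by positivity
  have hpbig := isBigO_log_div_pow_of_mul_choose (hp.isBigO.trans (isBigO_const_mul_self _ _ _))
  obtain ⟨c, hc, hpc⟩ := exists_eventually_le_log_div_pow hd hpbig
  filter_upwards [hpc, eventually_nonneg_of_mul_choose_isEquivalent hj' hp,
    eventually_mul_log_le_natCast c,
    (isLittleO_one_add_log_mul_log (zero_lt_one.trans_le hc)).def hδ,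
    eventually_sub_mul_log_le_mul_choose hj' hδ hp,
    (tendsto_mul_pow_pred_zero hd hpbig).eventually_le_const hδ,
    eventually_forall_natCast_pow_le hR one_pos,
    eventually_forall_natCast_pow_le hR (δ := ε / 5 / (2 * j ^ k)) (by positivity),
    tendsto_log_natCast_atTop.eventually_ge_atTop (j : ℝ)]
    with n hpc hp₀ hcn hlogc hpB hpN hrlog hrk hjlog r hr hrR
  have hlog : 1 ≤ Real.log n := le_trans (mod_cast hj) hjlog
  have hrlog : (r : ℝ) ≤ Real.log n := by
    simpa using (le_self_pow₀ (mod_cast hr) (by omega)).trans (hrlog r hrR)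
  have hrk : 2 * (r * j : ℝ) ^ k ≤ ε / 5 * Real.log n := by
    have hrk := hrk r hrR
    rw [div_mul_eq_mul_div, le_div_iff₀ (by positivity)] at hrk
    linarith [mul_pow (r : ℝ) j k]
  rw [Real.norm_of_nonneg (zero_le_one.trans hlog)] at hlogc
  exact binomExp_natCard_isJComponent_le_rpow hj hjk hr hp₀
    (one_le_mul_of_one_le_of_one_le hc hlog) hcn hpc ((le_abs_self _).trans hlogc) hrk
    (by linarith) hpB hpN

end Asymptotic

/-- **Case 1 estimate.** For `k ≥ 3`, `1 ≤ j ≤ k-1`, `ω = log log n`, and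
`(j log n - ω)/C(n,k-j) ≤ p ≤ (j log n + ω)/C(n,k-j)`, the expected number `E(X_r)` of
`j`-components of `H^k(n,p)` consisting of exactly `r` `j`-sets, for any `r` with
`3 ≤ r ≤ log log n`, satisfies `E(X_r) ≤ n^{-4rj/7}` for all sufficiently large `n`. -/
theorem small_component_expectation (k j : ℕ) (hk : 3 ≤ k) (hj : 1 ≤ j) (hjk : j ≤ k - 1)
    (p : ℕ → ℝ)
    (hp : ∀ᶠ n : ℕ in atTop,
      ((j : ℝ) * Real.log n - Real.log (Real.log n)) / (n.choose (k - j) : ℝ) ≤ p n ∧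
        p n ≤ ((j : ℝ) * Real.log n + Real.log (Real.log n)) / (n.choose (k - j) : ℝ)) :
    ∀ᶠ n : ℕ in atTop, ∀ r : ℕ, 3 ≤ r → (r : ℝ) ≤ Real.log (Real.log n) →
      binomExp n k (p n) (fun H =>
          (Nat.card {C : Finset (Finset (Fin n)) // IsJComponent n j H C ∧ C.card = r} : ℝ)) ≤
        (n : ℝ) ^ (-(4 * (r : ℝ) * (j : ℝ)) / 7) := by
  have hlog := isEquivalent_mul_choose_of_window (mod_cast (by omega : j ≠ 0))
    (by simpa using isLittleO_log_log_pow_log 1) hp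
  -- `ε = 2 / 21` makes the two exponents equal at `r = 3`.
  filter_upwards [small_component_expectation_general hj (by omega) hlog
    (isLittleO_log_log_pow_log k) (ε := 2 / 21) (by norm_num), eventually_ge_atTop 1]
    with n hbound hn r hr hrR
  refine (hbound r (by omega) hrR).trans (Real.rpow_le_rpow_of_exponent_le (mod_cast hn) ?_)
  have hr' : (3 : ℝ) ≤ r := mod_cast hr
  have hexponent : 0 ≤ (j : ℝ) * (r - 3) := mul_nonneg j.cast_nonneg (sub_nonneg.mpr hr')
  linarith

end
end
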